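/- Let γ be a time optimal trajectory of (Σ) on [a,b] whose control u vanishes almost everywhere on some nondegenerate subinterval (γ contains a singular arc). Then γ is of type B_t S_s B_{t'}: there exist a ≤ c ≤ d ≤ b and constants ε, ε' ∈ {−1,1} such that u = ε a.e. on [a,c], u = 0 a.e. on [c,d], and u = ε' a.e. on [d,b]. Moreover d − c < 2π/cos α, and if c > a or d < b then d − c ≤ π/cos α. -/

import Mathlib

/-!
If `γ a = 1` and `u = 0` near `a`, the costate which the Pontryagin maximum principle attaches to
`γ` is its last row. This can be seen without the principle: the effect of a needle variation at
time `t` is compensated by a small deformation of the initial singular arc, which tilts its axis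
twice and changes its length, and to first order this saves time unless
`u t * γ t 2 0 = |γ t 2 0|`. So this condition holds almost everywhere, whence the Hamiltonian
`cos α * γ t 2 2 + sin α * |γ t 2 0|` keeps its initial value `cos α`.

At each zero of the switching function `γ t 2 0` the costate is therefore back at `(0, 0, 1)`. A
bang arc between two zeros would have to be a full turn, leading back to its starting point, which
is not optimal. Hence the zeros form an interval: the singular arc is followed by at most one bang
arc and, reversing time, preceded by at most one. A singular arc which is a full turn is not optimal
either. If a singular arc longer than half a turn is followed by a bang arc, moving half a turn of
it behind the bang arc, with the sign of the bang reversed, preserves both the endpoints and the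
duration; the result is bang-singular after its first singular arc, so it is not optimal.
-/

open Real MeasureTheory intervalIntegral Matrix

/-- The drift matrix `f = cos α · ![![0,1,0],![-1,0,0],![0,0,0]]`. -/
noncomputable def fM (α : ℝ) : Matrix (Fin 3) (Fin 3) ℝ :=
  Real.cos α • !![0,1,0; -1,0,0; 0,0,0]

/-- The controlled matrix `g = sin α · ![![0,0,0],![0,0,1],![0,-1,0]]`. -/
noncomputable def gM (α : ℝ) : Matrix (Fin 3) (Fin 3) ℝ :=
  Real.sin α • !![0,0,0; 0,0,1; 0,-1,0]

/-- An admissible pair for `(Σ)` on `[a,b]`: a measurable control `u : [a,b] → [-1,1]`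
together with an absolutely continuous curve `γ : [a,b] → SO(3)` solving
`γ' = γ·(f + u·g)` a.e. (expressed in integral form, entrywise). -/
structure AdmissiblePair (α a b : ℝ) (γ : ℝ → Matrix (Fin 3) (Fin 3) ℝ) (u : ℝ → ℝ) : Prop where
  hab : a ≤ b
  humeas : Measurable u
  hubound : ∀ t ∈ Set.Icc a b, |u t| ≤ 1
  hso3 : ∀ t ∈ Set.Icc a b, γ t * (γ t).transpose = 1 ∧ (γ t).det = 1
  hcont : ContinuousOn γ (Set.Icc a b)
  hode : ∀ t ∈ Set.Icc a b, ∀ i j,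
    γ t i j = γ a i j + ∫ s in a..t, (γ s * (fM α + u s • gM α)) i j

/-- Time optimality for `(Σ)`. -/
def TimeOptimal (α a b : ℝ) (γ : ℝ → Matrix (Fin 3) (Fin 3) ℝ) (u : ℝ → ℝ) : Prop :=
  AdmissiblePair α a b γ u ∧
  ∀ a' b' γ' u', AdmissiblePair α a' b' γ' u' →
    γ' a' = γ a → γ' b' = γ b → b - a ≤ b' - a'

/-- `t` is a switching time of the control `u : [a,b] → [-1,1]`: in no neighbourhood of `t`
is `u` a.e. equal to a constant `c ∈ {-1,1}`. -/
def IsSwitching (a b : ℝ) (u : ℝ → ℝ) (t : ℝ) : Prop :=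
  t ∈ Set.Icc a b ∧ ∀ ε > 0, ¬ ∃ c : ℝ, (c = 1 ∨ c = -1) ∧
    ∀ᵐ s ∂(volume.restrict (Set.Ioo (t - ε) (t + ε) ∩ Set.Icc a b)), u s = c

open Filter Set
open scoped Topology Matrix.Norms.L2Operator

local notation "SO₃" => specialOrthogonalGroup (Fin 3) ℝ

section Trigonometry

variable {α ε : ℝ}

lemma cos_pos_of_mem_Ioo_zero_pi_div_two (hα : α ∈ Ioo 0 (π / 2)) : 0 < cos α :=
  cos_pos_of_mem_Ioo ⟨by linarith [hα.1, pi_pos], hα.2⟩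

lemma sin_pos_of_mem_Ioo_zero_pi_div_two (hα : α ∈ Ioo 0 (π / 2)) : 0 < sin α :=
  sin_pos_of_mem_Ioo ⟨hα.1, by linarith [hα.2, pi_pos]⟩

lemma cos_mul_of_abs_eq_one (hε : |ε| = 1) (x : ℝ) : cos (ε * x) = cos x := by
  rcases eq_or_eq_neg_of_abs_eq hε with rfl | rfl <;> simp

lemma sin_mul_of_abs_eq_one (hε : |ε| = 1) (x : ℝ) : sin (ε * x) = ε * sin x := by
  rcases eq_or_eq_neg_of_abs_eq hε with rfl | rfl <;> simp

end Trigonometry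

section Rodrigues

variable {A : Type*}

section Algebra

variable [Ring A] [Algebra ℝ A] {U V B : A}

/-- Rodrigues' formula for `exp (θ U)`, valid when `U ^ 3 = -U`, as it is for the generators of
the unit speed rotation groups. -/
noncomputable def rodrigues (U : A) (θ : ℝ) : A :=
  1 + sin θ • U + (1 - cos θ) • U ^ 2

lemma rodrigues_zero (U : A) : rodrigues U 0 = 1 := by
  simp [rodrigues]

lemma rodrigues_add (hU : U ^ 3 = -U) (θ φ : ℝ) :
    rodrigues U (θ + φ) = rodrigues U θ * rodrigues U φ := by
  have h₁₂ : U * U ^ 2 = -U := by rw [← pow_succ', hU]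
  have h₂₁ : U ^ 2 * U = -U := by rw [← pow_succ, hU]
  have h₂₂ : U ^ 2 * U ^ 2 = -U ^ 2 := by rw [← pow_add, pow_succ U 3, hU, neg_mul, sq]
  simp only [rodrigues, mul_add, add_mul, one_mul, mul_one, smul_mul_assoc, mul_smul_comm,
    h₁₂, h₂₁, h₂₂, ← sq, sin_add, cos_add]
  module

lemma rodrigues_eq_one {θ : ℝ} (h : cos θ = 1) : rodrigues U θ = 1 := by
  have hs : sin θ = 0 := by simpa [h] using sin_sq θ
  simp [rodrigues, h, hs]

lemma mul_rodrigues_of_mul_eq (h : B * U = V * B) (θ : ℝ) :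
    B * rodrigues U θ = rodrigues V θ * B := by
  have h₂ : B * U ^ 2 = V ^ 2 * B := (show SemiconjBy B U V from h).pow_right 2
  simp only [rodrigues, mul_add, add_mul, mul_smul_comm, smul_mul_assoc, h, h₂, mul_one, one_mul]

end Algebra

lemma hasDerivAt_rodrigues [NormedRing A] [NormedAlgebra ℝ A] {U : A} (hU : U ^ 3 = -U) (θ : ℝ) :
    HasDerivAt (rodrigues U) (rodrigues U θ * U) θ := by
  have h := (((hasDerivAt_sin θ).smul_const U).const_add 1).add
    (((hasDerivAt_cos θ).const_sub 1).smul_const (U ^ 2))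
  refine h.congr_deriv ?_
  have h₂₁ : U ^ 2 * U = -U := by rw [← pow_succ, hU]
  simp only [rodrigues, add_mul, one_mul, smul_mul_assoc, h₂₁, ← sq]
  module

end Rodrigues

section SpecialOrthogonal

variable {n R : Type*} [Fintype n] [DecidableEq n] [CommRing R] {A : Matrix n n R}

lemma mul_transpose_of_mem_specialOrthogonalGroup (hA : A ∈ specialOrthogonalGroup n R) :
    A * Aᵀ = 1 :=
  (mem_orthogonalGroup_iff n R).1 (mem_specialOrthogonalGroup_iff.1 hA).1

lemma transpose_mul_of_mem_specialOrthogonalGroup (hA : A ∈ specialOrthogonalGroup n R) :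
    Aᵀ * A = 1 :=
  (mem_orthogonalGroup_iff' n R).1 (mem_specialOrthogonalGroup_iff.1 hA).1

lemma transpose_mem_specialOrthogonalGroup (hA : A ∈ specialOrthogonalGroup n R) :
    Aᵀ ∈ specialOrthogonalGroup n R := by
  rw [mem_specialOrthogonalGroup_iff, mem_orthogonalGroup_iff, transpose_transpose, det_transpose]
  exact ⟨transpose_mul_of_mem_specialOrthogonalGroup hA, (mem_specialOrthogonalGroup_iff.1 hA).2⟩

lemma adjugate_eq_transpose_of_mem_specialOrthogonalGroup (hA : A ∈ specialOrthogonalGroup n R) :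
    A.adjugate = Aᵀ := by
  rw [← Matrix.mul_one A.adjugate, ← mul_transpose_of_mem_specialOrthogonalGroup hA,
    ← Matrix.mul_assoc, adjugate_mul, (mem_specialOrthogonalGroup_iff.1 hA).2, one_smul,
    Matrix.one_mul]

end SpecialOrthogonal

section SpecialOrthogonalThree

variable {A B : Matrix (Fin 3) (Fin 3) ℝ}

lemma sum_sq_row_of_mem_SO₃ (hA : A ∈ SO₃) (i : Fin 3) :
    A i 0 ^ 2 + A i 1 ^ 2 + A i 2 ^ 2 = 1 := by
  have h := congrFun₂ (mul_transpose_of_mem_specialOrthogonalGroup hA) i i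
  simpa only [mul_apply, transpose_apply, Fin.sum_univ_three, one_apply_eq, ← sq] using h

lemma row_eq_zero_of_mem_SO₃_of_apply_two_eq_one {i : Fin 3} (hA : A ∈ SO₃) (h : A i 2 = 1) :
    A i 0 = 0 ∧ A i 1 = 0 := by
  have hrow := sum_sq_row_of_mem_SO₃ hA i
  rw [h] at hrow
  constructor <;> nlinarith [sq_nonneg (A i 0), sq_nonneg (A i 1)]

lemma conj_gM_apply_zero_one_of_mem_SO₃ (hA : A ∈ SO₃) (α : ℝ) :
    (Aᵀ * gM α * A) 0 1 = sin α * A 0 2 := by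
  have h := congrFun₂ (adjugate_eq_transpose_of_mem_specialOrthogonalGroup hA) 2 0
  simp only [adjugate_fin_three, transpose_apply, of_apply, cons_val] at h
  simp [gM, mul_apply, Fin.sum_univ_three, ← h]
  ring

/-- The cofactor identities, solved for the lower left entries by Cramer's rule. -/
lemma lower_apply_of_mem_SO₃ (hA : A ∈ SO₃) :
    A 1 1 * (1 - A 0 2 ^ 2) = A 0 0 * A 2 2 - A 0 1 * A 0 2 * A 1 2 ∧
    A 1 0 * (1 - A 0 2 ^ 2) = -(A 0 1 * A 2 2) - A 0 0 * A 0 2 * A 1 2 ∧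
    A 2 0 = A 0 1 * A 1 2 - A 0 2 * A 1 1 ∧
    A 2 1 = A 0 2 * A 1 0 - A 0 0 * A 1 2 := by
  have h := fun i j ↦ congrFun₂ (adjugate_eq_transpose_of_mem_specialOrthogonalGroup hA) i j
  simp only [adjugate_fin_three, transpose_apply] at h
  have h₁₁ := h 1 1
  have h₁₀ := h 0 1
  have h₂₀ := h 0 2
  have h₂₁ := h 1 2
  simp only [of_apply, cons_val] at h₁₁ h₁₀ h₂₀ h₂₁
  refine ⟨?_, ?_, ?_, ?_⟩
  · linear_combination -h₁₁ + A 0 2 * h₂₀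
  · linear_combination -h₁₀ - A 0 2 * h₂₁
  · linear_combination -h₂₀
  · linear_combination -h₂₁

lemma eq_of_mem_SO₃_of_upper_eq (hA : A ∈ SO₃) (hB : B ∈ SO₃)
    (hA₀ : 0 < A 0 0) (hB₀ : 0 < B 0 0) (hA₂ : 0 < A 2 2) (hB₂ : 0 < B 2 2)
    (h₀₁ : A 0 1 = B 0 1) (h₀₂ : A 0 2 = B 0 2) (h₁₂ : A 1 2 = B 1 2) : A = B := by
  have h₀₀ : A 0 0 = B 0 0 := by
    have hrA := sum_sq_row_of_mem_SO₃ hA 0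
    have hrB := sum_sq_row_of_mem_SO₃ hB 0
    rw [h₀₁, h₀₂] at hrA
    exact (pow_left_inj₀ hA₀.le hB₀.le two_ne_zero).1 (by linarith)
  have h₂₂ : A 2 2 = B 2 2 := by
    have hcA := sum_sq_row_of_mem_SO₃ (transpose_mem_specialOrthogonalGroup hA) 2
    have hcB := sum_sq_row_of_mem_SO₃ (transpose_mem_specialOrthogonalGroup hB) 2
    simp only [transpose_apply] at hcA hcB
    rw [h₀₂, h₁₂] at hcA
    exact (pow_left_inj₀ hA₂.le hB₂.le two_ne_zero).1 (by linarith)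
  have hne : 1 - B 0 2 ^ 2 ≠ 0 := by
    have := sum_sq_row_of_mem_SO₃ hB 0
    nlinarith [sq_nonneg (B 0 1)]
  obtain ⟨hA₁₁, hA₁₀, hA₂₀, hA₂₁⟩ := lower_apply_of_mem_SO₃ hA
  obtain ⟨hB₁₁, hB₁₀, hB₂₀, hB₂₁⟩ := lower_apply_of_mem_SO₃ hB
  rw [h₀₀, h₀₁, h₀₂, h₁₂, h₂₂] at hA₁₁ hA₁₀
  have h₁₁ : A 1 1 = B 1 1 := mul_right_cancel₀ hne (hA₁₁.trans hB₁₁.symm)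
  have h₁₀ : A 1 0 = B 1 0 := mul_right_cancel₀ hne (hA₁₀.trans hB₁₀.symm)
  have h₂₀ : A 2 0 = B 2 0 := by rw [hA₂₀, hB₂₀, h₀₁, h₀₂, h₁₂, h₁₁]
  have h₂₁ : A 2 1 = B 2 1 := by rw [hA₂₁, hB₂₁, h₀₀, h₀₂, h₁₂, h₁₀]
  ext i j
  fin_cases i <;> fin_cases j <;> assumption

end SpecialOrthogonalThree

section Rotation

/-- The velocity of the bang arcs with control `1`, as a function of the parameter of `(Σ)`. These
are the infinitesimal rotations of unit speed about the axes that `(Σ)` can use: up to time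
scaling, every arc with constant control is generated by one of them. -/
noncomputable def generator (β : ℝ) : Matrix (Fin 3) (Fin 3) ℝ :=
  fM β + gM β

/-- The rotation by the angle `θ` generated by `generator β`. -/
noncomputable def rot (β θ : ℝ) : Matrix (Fin 3) (Fin 3) ℝ :=
  rodrigues (generator β) θ

/-- The velocity `f + v g` of `(Σ)` for the control value `v`, pulled back to the identity. -/
noncomputable def velocity (α v : ℝ) : Matrix (Fin 3) (Fin 3) ℝ :=
  fM α + v • gM α

lemma generator_eq (β : ℝ) :
    generator β = !![0, cos β, 0; -cos β, 0, sin β; 0, -sin β, 0] := by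
  ext i j
  fin_cases i <;> fin_cases j <;> simp [generator, fM, gM]

lemma velocity_eq (α v : ℝ) :
    velocity α v = !![0, cos α, 0; -cos α, 0, v * sin α; 0, -(v * sin α), 0] := by
  ext i j
  fin_cases i <;> fin_cases j <;> simp [velocity, fM, gM]

lemma velocity_eq_smul_generator {α v ω β : ℝ} (hc : ω * cos β = cos α)
    (hs : ω * sin β = v * sin α) : velocity α v = ω • generator β := by
  rw [velocity_eq, generator_eq]
  simp [hc, hs]

lemma generator_sq (β : ℝ) :
    generator β ^ 2 =
      !![-cos β ^ 2, 0, sin β * cos β; 0, -1, 0; sin β * cos β, 0, -sin β ^ 2] := by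
  rw [generator_eq, sq]
  ext i j
  fin_cases i <;> fin_cases j <;> simp
  · ring
  · ring
  · linear_combination -sin_sq_add_cos_sq β
  · ring

lemma generator_pow_three (β : ℝ) : generator β ^ 3 = -generator β := by
  rw [pow_succ, generator_sq, generator_eq]
  ext i j
  fin_cases i <;> fin_cases j <;> simp
  · linear_combination -cos β * sin_sq_add_cos_sq β
  · linear_combination sin β * sin_sq_add_cos_sq β

lemma rot_eq (β θ : ℝ) :
    rot β θ =
      !![1 - (1 - cos θ) * cos β ^ 2, sin θ * cos β, (1 - cos θ) * (sin β * cos β);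
        -(sin θ * cos β), cos θ, sin θ * sin β;
        (1 - cos θ) * (sin β * cos β), -(sin θ * sin β), 1 - (1 - cos θ) * sin β ^ 2] := by
  rw [rot, rodrigues, generator_sq, generator_eq]
  ext i j
  fin_cases i <;> fin_cases j <;> simp <;> ring

lemma rot_zero (β : ℝ) : rot β 0 = 1 := rodrigues_zero _

lemma rot_add (β θ φ : ℝ) : rot β (θ + φ) = rot β θ * rot β φ :=
  rodrigues_add (generator_pow_three β) θ φ

lemma rot_neg_mul (β θ : ℝ) : rot β (-θ) * rot β θ = 1 := by
  rw [← rot_add, neg_add_cancel, rot_zero]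

lemma rot_mul_neg (β θ : ℝ) : rot β θ * rot β (-θ) = 1 := by
  rw [← rot_add, add_neg_cancel, rot_zero]

lemma transpose_rot (β θ : ℝ) : (rot β θ)ᵀ = rot β (-θ) := by
  rw [rot_eq, rot_eq, cos_neg, sin_neg]
  ext i j
  fin_cases i <;> fin_cases j <;> simp

lemma rot_mem_SO₃ (β θ : ℝ) : rot β θ ∈ SO₃ := by
  have hmul (φ : ℝ) : rot β φ * (rot β φ)ᵀ = 1 := by rw [transpose_rot, rot_mul_neg]
  have hdet (φ : ℝ) : (rot β φ).det * (rot β φ).det = 1 := by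
    simpa using congrArg det (hmul φ)
  refine mem_specialOrthogonalGroup_iff.2 ⟨(mem_orthogonalGroup_iff _ _).2 (hmul θ), ?_⟩
  rw [← add_halves θ, rot_add, det_mul, hdet]

lemma hasDerivAt_rot (β θ : ℝ) : HasDerivAt (rot β) (rot β θ * generator β) θ :=
  hasDerivAt_rodrigues (generator_pow_three β) θ

lemma rot_zero_pi_mul_rot (β θ : ℝ) : rot 0 π * rot β θ = rot (-β) θ * rot 0 π := by
  refine mul_rodrigues_of_mul_eq ?_ θ
  rw [rot_eq, generator_eq, generator_eq]
  ext i j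
  fin_cases i <;> fin_cases j <;> simp [mul_apply, Fin.sum_univ_three]

lemma hasStrictDerivAt_rot_axis (θ : ℝ) :
    HasStrictDerivAt (rot · θ)
      !![0, 0, 1 - cos θ; 0, 0, sin θ; 1 - cos θ, -sin θ, 0] 0 := by
  have hgen : HasStrictDerivAt generator !![0, 0, 0; 0, 0, 1; 0, -1, 0] 0 :=
    (((hasStrictDerivAt_cos 0).smul_const _).add
      ((hasStrictDerivAt_sin 0).smul_const _)).congr_deriv (by simp)
  have h := ((hgen.const_smul (sin θ)).const_add 1).add
    ((hgen.mul hgen).const_smul (1 - cos θ))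
  simp only [← sq] at h
  refine h.congr_deriv ?_
  rw [generator_eq]
  ext i j
  fin_cases i <;> fin_cases j <;> simp

end Rotation

section Steering

lemma exists_local_lift {𝕜 E F : Type*} [NontriviallyNormedField 𝕜]
    [NormedAddCommGroup E] [NormedSpace 𝕜 E] [CompleteSpace E]
    [NormedAddCommGroup F] [NormedSpace 𝕜 F] {Ψ : E → F} {Ψ' : E ≃L[𝕜] F} {x : E}
    (hΨ : HasStrictFDerivAt Ψ (Ψ' : E →L[𝕜] F) x) {y : 𝕜 → F} {y' : F} {t₀ : 𝕜}
    (hy : HasDerivAt y y' t₀) (hy₀ : Ψ x = y t₀) :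
    ∃ z : 𝕜 → E, z t₀ = x ∧ HasDerivAt z (Ψ'.symm y') t₀ ∧ ∀ᶠ t in 𝓝 t₀, Ψ (z t) = y t := by
  refine ⟨hΨ.localInverse ∘ y, ?_, ?_, ?_⟩
  · rw [Function.comp_apply, ← hy₀, hΨ.localInverse_apply_image]
  · exact hΨ.to_localInverse.hasFDerivAt.comp_hasDerivAt_of_eq t₀ hy hy₀
  · exact hy.continuousAt.eventually (hy₀ ▸ hΨ.eventually_right_inverse)

lemma exists_hasStrictFDerivAt_mul_mul {A : Type*} [NormedRing A] [NormedAlgebra ℝ A]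
    {f g h : ℝ → A} {f' g' h' : A} (hf : HasStrictDerivAt f f' 0) (hg : HasStrictDerivAt g g' 0)
    (hh : HasStrictDerivAt h h' 0) (hf₀ : f 0 = 1) (hg₀ : g 0 = 1) (hh₀ : h 0 = 1) :
    ∃ Φ' : ℝ × ℝ × ℝ →L[ℝ] A,
      HasStrictFDerivAt (fun p : ℝ × ℝ × ℝ ↦ f p.1 * g p.2.1 * h p.2.2) Φ' 0 ∧
      ∀ p, Φ' p = p.1 • f' + p.2.1 • g' + p.2.2 • h' := by
  have hp₁ : HasStrictFDerivAt (fun p : ℝ × ℝ × ℝ ↦ p.1) (.fst ℝ ℝ (ℝ × ℝ)) 0 :=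
    hasStrictFDerivAt_fst
  have hp₂ : HasStrictFDerivAt (fun p : ℝ × ℝ × ℝ ↦ p.2) (.snd ℝ ℝ (ℝ × ℝ)) 0 :=
    hasStrictFDerivAt_snd
  have hf₁ := HasStrictFDerivAt.comp 0 hf.hasStrictFDerivAt hp₁
  have hg₁ := HasStrictFDerivAt.comp 0 hg.hasStrictFDerivAt hp₂.fst
  have hh₁ := HasStrictFDerivAt.comp 0 hh.hasStrictFDerivAt hp₂.snd
  refine ⟨_, (hf₁.mul' hg₁).mul' hh₁, fun p ↦ ?_⟩
  simp [hf₀, hg₀, hh₀]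
  abel

/-- The strictly upper triangular entries, which are coordinates on `SO(3)` near `1`. -/
noncomputable def upperEntries : Matrix (Fin 3) (Fin 3) ℝ →L[ℝ] ℝ × ℝ × ℝ :=
  LinearMap.toContinuousLinearMap
    ((entryLinearMap ℝ ℝ 0 1).prod ((entryLinearMap ℝ ℝ 0 2).prod (entryLinearMap ℝ ℝ 1 2)))

lemma upperEntries_apply (A : Matrix (Fin 3) (Fin 3) ℝ) :
    upperEntries A = (A 0 1, A 0 2, A 1 2) := rfl

lemma eventually_eq_of_upperEntries_eq {X : Type*} {l : Filter X}
    {A B : X → Matrix (Fin 3) (Fin 3) ℝ} (hA : Tendsto A l (𝓝 1)) (hB : Tendsto B l (𝓝 1))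
    (hASO : ∀ᶠ x in l, A x ∈ SO₃) (hBSO : ∀ᶠ x in l, B x ∈ SO₃)
    (h : ∀ᶠ x in l, upperEntries (A x) = upperEntries (B x)) : A =ᶠ[l] B := by
  have hpos {C : X → Matrix (Fin 3) (Fin 3) ℝ} (hC : Tendsto C l (𝓝 1)) (i : Fin 3) :
      ∀ᶠ x in l, 0 < C x i i :=
    (tendsto_pi_nhds.1 (tendsto_pi_nhds.1 hC i) i).eventually_const_lt (by simp)
  filter_upwards [hASO, hBSO, h, hpos hA 0, hpos hB 0, hpos hA 2, hpos hB 2]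
    with x hA hB h hA₀ hB₀ hA₂ hB₂
  simp only [upperEntries_apply, Prod.mk.injEq] at h
  exact eq_of_mem_SO₃_of_upper_eq hA hB hA₀ hB₀ hA₂ hB₂ h.1 h.2.1 h.2.2

/-- The effect of replacing the singular arc `rot 0 (3 * θ)` by the concatenation
`rot β₁ θ * rot β₂ θ * rot 0 (θ + τ)`, seen from the point at angle `θ` of the singular arc, where
`p = (β₁, β₂, τ)`. The two tilts of the axis and the change of length span all three directions. -/
noncomputable def compensator (θ : ℝ) (p : ℝ × ℝ × ℝ) : Matrix (Fin 3) (Fin 3) ℝ :=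
  rot 0 (-θ) * rot p.1 θ * (rot p.2.1 θ * rot 0 (-θ)) * rot 0 p.2.2

lemma compensator_zero (θ : ℝ) : compensator θ 0 = 1 := by
  simp [compensator, rot_neg_mul, rot_mul_neg, rot_zero]

lemma compensator_mem_SO₃ (θ : ℝ) (p : ℝ × ℝ × ℝ) : compensator θ p ∈ SO₃ := by
  unfold compensator
  repeat' apply mul_mem
  all_goals exact rot_mem_SO₃ _ _

lemma exists_hasStrictFDerivAt_compensator {θ : ℝ} (hθ : θ ∈ Ioo 0 π) :
    ∃ (Φ' : ℝ × ℝ × ℝ →L[ℝ] Matrix (Fin 3) (Fin 3) ℝ) (e : (ℝ × ℝ × ℝ) ≃L[ℝ] ℝ × ℝ × ℝ),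
      HasStrictFDerivAt (compensator θ) Φ' 0 ∧ upperEntries.comp Φ' = e ∧
      ∀ p, (e p).1 = p.2.2 := by
  have hsin : sin θ ≠ 0 := (sin_pos_of_mem_Ioo hθ).ne'
  have hcos : 1 - cos θ ≠ 0 := by
    have := cos_lt_cos_of_nonneg_of_le_pi le_rfl hθ.2.le hθ.1
    rw [cos_zero] at this
    linarith
  have hrot : HasStrictDerivAt (rot 0) (generator 0) 0 := by
    have : ContDiff ℝ 1 (rot 0) := by unfold rot rodrigues; fun_prop
    simpa [rot_zero] using
      this.contDiffAt.hasStrictDerivAt' (hasDerivAt_rot 0 0) one_ne_zero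
  obtain ⟨Φ', hΦ, hΦ'⟩ := exists_hasStrictFDerivAt_mul_mul
    ((hasStrictDerivAt_rot_axis θ).const_mul (rot 0 (-θ)))
    ((hasStrictDerivAt_rot_axis θ).mul_const (rot 0 (-θ))) hrot
    (rot_neg_mul 0 θ) (rot_mul_neg 0 θ) (rot_zero 0)
  have hentries (p : ℝ × ℝ × ℝ) : upperEntries (Φ' p) =
      (p.2.2, (1 - cos θ) * (p.2.1 - p.1), sin θ * (p.1 + p.2.1)) := by
    rw [hΦ', upperEntries_apply, rot_eq, generator_eq]
    refine Prod.ext (by simp) (Prod.ext ?_ ?_) <;> simp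
    · linear_combination -p.1 * sin_sq_add_cos_sq θ
    · ring
  have hinj : Function.Injective (upperEntries.comp Φ').toLinearMap := by
    refine (injective_iff_map_eq_zero _).2 fun p hp ↦ ?_
    have := (hentries p).symm.trans hp
    simp only [Prod.mk_eq_zero, mul_eq_zero, hsin, hcos, false_or] at this
    obtain ⟨h₁, h₂, h₃⟩ := this
    exact Prod.ext (by simp; linarith) (Prod.ext (by simp; linarith) h₁)
  refine ⟨Φ', (LinearEquiv.ofInjectiveEndo _ hinj).toContinuousLinearEquiv, hΦ, by ext <;> rfl,
    fun p ↦ congrArg Prod.fst (hentries p)⟩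

lemma eventually_exists_compensator_eq {θ : ℝ} (hθ : θ ∈ Ioo 0 π)
    {Y : ℝ → Matrix (Fin 3) (Fin 3) ℝ} {D : Matrix (Fin 3) (Fin 3) ℝ}
    (hY : ∀ᶠ η in 𝓝 0, Y η ∈ SO₃) (hY₀ : Y 0 = 1) (hD : HasDerivAt Y D 0) (hneg : D 0 1 < 0)
    {S : Set (ℝ × ℝ × ℝ)} (hS : S ∈ 𝓝 0) :
    ∀ᶠ η in 𝓝[>] 0, ∃ p ∈ S, p.2.2 < 0 ∧ compensator θ p = Y η := by
  obtain ⟨Φ', e, hΦ, he, he₁⟩ := exists_hasStrictFDerivAt_compensator hθ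
  obtain ⟨z, hz₀, hz, hΦz⟩ := exists_local_lift (Ψ' := e)
    (he ▸ upperEntries.hasStrictFDerivAt.comp 0 hΦ)
    (upperEntries.hasFDerivAt.comp_hasDerivAt 0 hD) (by simp [compensator_zero, hY₀])
  have hzS : ∀ᶠ η in 𝓝 0, z η ∈ S := hz.continuousAt.eventually_mem (by rwa [hz₀])
  have hlength : ∀ᶠ η in 𝓝[>] 0, (z η).2.2 < 0 := by
    have hτ : HasDerivAt (fun η ↦ (z η).2.2) (D 0 1) 0 := by
      have : (e.symm (upperEntries D)).2.2 = D 0 1 := by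
        rw [← he₁, e.apply_symm_apply, upperEntries_apply]
      exact this ▸ hz.snd.snd
    filter_upwards [hτ.hasDerivWithinAt.limsup_slope_le' (by simp) hneg, self_mem_nhdsWithin]
      with η hη hpos
    simpa [slope_def_field, hz₀, div_neg_iff, (mem_Ioi.1 hpos).not_gt, mem_Ioi.1 hpos] using hη
  have heq : (fun η ↦ compensator θ (z η)) =ᶠ[𝓝 0] Y := by
    refine eventually_eq_of_upperEntries_eq ?_ ?_ (.of_forall fun _ ↦ compensator_mem_SO₃ _ _) hY
      hΦz
    · have := hΦ.continuousAt.tendsto.comp (hz₀ ▸ hz.continuousAt.tendsto)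
      rwa [compensator_zero] at this
    · simpa [hY₀] using hD.continuousAt.tendsto
  filter_upwards [nhdsWithin_le_nhds hzS, nhdsWithin_le_nhds heq, hlength] with η hηS hη hneg
  exact ⟨z η, hηS, hneg, hη⟩

end Steering

section Integral

variable {α p q : ℝ} {γ : ℝ → Matrix (Fin 3) (Fin 3) ℝ} {u : ℝ → ℝ}

lemma intervalIntegrable_mul_velocity (hγ : ContinuousOn γ (uIcc p q)) (hu : Measurable u)
    (hu₁ : ∀ t ∈ uIcc p q, |u t| ≤ 1) :
    IntervalIntegrable (fun s ↦ γ s * velocity α (u s)) volume p q := by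
  have hui : IntervalIntegrable u volume p q := intervalIntegrable_iff.2 <|
    Measure.integrableOn_of_bounded measure_Ioc_lt_top.ne
      hu.aestronglyMeasurable (ae_restrict_of_forall_mem measurableSet_uIoc fun t ht ↦
        hu₁ t (uIoc_subset_uIcc ht))
  have hug : IntervalIntegrable (fun s ↦ u s • gM α) volume p q :=
    ⟨hui.1.smul_const _, hui.2.smul_const _⟩
  exact (intervalIntegrable_const.add hug).continuousOn_mul hγ

lemma intervalIntegral_apply {m n : Type*} [Fintype m] [Fintype n] [DecidableEq n]
    {f : ℝ → Matrix m n ℝ} (hf : IntervalIntegrable f volume p q) (i : m) (j : n) :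
    (∫ s in p..q, f s) i j = ∫ s in p..q, f s i j :=
  ((LinearMap.toContinuousLinearMap (entryLinearMap ℝ ℝ i j)).intervalIntegral_comp_comm hf).symm

lemma eq_add_integral_iff {A B : Matrix (Fin 3) (Fin 3) ℝ} (hγ : ContinuousOn γ (uIcc p q))
    (hu : Measurable u) (hu₁ : ∀ t ∈ uIcc p q, |u t| ≤ 1) :
    B = A + ∫ s in p..q, γ s * velocity α (u s) ↔
      ∀ i j, B i j = A i j + ∫ s in p..q, (γ s * (fM α + u s • gM α)) i j := by
  have hint := intervalIntegrable_mul_velocity (α := α) hγ hu hu₁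
  simp only [← Matrix.ext_iff, Matrix.add_apply, intervalIntegral_apply hint]
  rfl

end Integral

namespace AdmissiblePair

variable {α a b c : ℝ} {γ γ' : ℝ → Matrix (Fin 3) (Fin 3) ℝ} {u u' : ℝ → ℝ}

lemma mem_SO₃ (h : AdmissiblePair α a b γ u) {t : ℝ} (ht : t ∈ Icc a b) : γ t ∈ SO₃ :=
  mem_specialOrthogonalGroup_iff.2
    ⟨(mem_orthogonalGroup_iff _ _).2 (h.hso3 t ht).1, (h.hso3 t ht).2⟩

lemma of_eq_add_integral (hab : a ≤ b) (hu : Measurable u) (hu₁ : ∀ t ∈ Icc a b, |u t| ≤ 1)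
    (hSO : ∀ t ∈ Icc a b, γ t ∈ SO₃) (hγ : ContinuousOn γ (Icc a b))
    (hint : ∀ t ∈ Icc a b, γ t = γ a + ∫ s in a..t, γ s * velocity α (u s)) :
    AdmissiblePair α a b γ u where
  hab := hab
  humeas := hu
  hubound := hu₁
  hso3 t ht := ⟨mul_transpose_of_mem_specialOrthogonalGroup (hSO t ht),
    (mem_specialOrthogonalGroup_iff.1 (hSO t ht)).2⟩
  hcont := hγ
  hode t ht := by
    have hsub : uIcc a t ⊆ Icc a b := by rw [uIcc_of_le ht.1]; exact Icc_subset_Icc_right ht.2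
    exact (eq_add_integral_iff (hγ.mono hsub) hu fun s hs ↦ hu₁ s (hsub hs)).1 (hint t ht)

lemma intervalIntegrable (h : AdmissiblePair α a b γ u) {p q : ℝ} (hp : p ∈ Icc a b)
    (hq : q ∈ Icc a b) : IntervalIntegrable (fun s ↦ γ s * velocity α (u s)) volume p q :=
  intervalIntegrable_mul_velocity (h.hcont.mono (uIcc_subset_Icc hp hq)) h.humeas
    fun t ht ↦ h.hubound t (uIcc_subset_Icc hp hq ht)

lemma left_mem (h : AdmissiblePair α a b γ u) : a ∈ Icc a b := left_mem_Icc.2 h.hab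

lemma right_mem (h : AdmissiblePair α a b γ u) : b ∈ Icc a b := right_mem_Icc.2 h.hab

lemma eq_add_integral (h : AdmissiblePair α a b γ u) {p t : ℝ} (hp : p ∈ Icc a b)
    (ht : t ∈ Icc a b) : γ t = γ p + ∫ s in p..t, γ s * velocity α (u s) := by
  have hfrom (t : ℝ) (ht : t ∈ Icc a b) : γ t = γ a + ∫ s in a..t, γ s * velocity α (u s) :=
    (eq_add_integral_iff (h.hcont.mono (uIcc_subset_Icc h.left_mem ht)) h.humeas
      fun s hs ↦ h.hubound s (uIcc_subset_Icc h.left_mem ht hs)).2 (h.hode t ht)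
  rw [← integral_interval_sub_left (h.intervalIntegrable h.left_mem ht)
    (h.intervalIntegrable h.left_mem hp), hfrom t ht, hfrom p hp]
  abel

lemma restrict (h : AdmissiblePair α a b γ u) {p q : ℝ} (hp : a ≤ p) (hpq : p ≤ q) (hq : q ≤ b) :
    AdmissiblePair α p q γ u := by
  have hsub := Icc_subset_Icc hp hq
  exact of_eq_add_integral hpq h.humeas (fun t ht ↦ h.hubound t (hsub ht))
    (fun t ht ↦ h.mem_SO₃ (hsub ht)) (h.hcont.mono hsub)
    fun t ht ↦ h.eq_add_integral ⟨hp, hpq.trans hq⟩ (hsub ht)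

lemma comp_add_right (h : AdmissiblePair α a b γ u) (r : ℝ) :
    AdmissiblePair α (a - r) (b - r) (fun t ↦ γ (t + r)) (fun t ↦ u (t + r)) := by
  have hmaps : MapsTo (· + r) (Icc (a - r) (b - r)) (Icc a b) := fun t ht ↦
    ⟨sub_le_iff_le_add.1 ht.1, le_sub_iff_add_le.1 ht.2⟩
  refine of_eq_add_integral (by linarith [h.hab]) (h.humeas.comp (measurable_add_const r))
    (fun t ht ↦ h.hubound _ (hmaps ht)) (fun t ht ↦ h.mem_SO₃ (hmaps ht))
    (h.hcont.comp (by fun_prop) hmaps) fun t ht ↦ ?_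
  rw [integral_comp_add_right (fun s ↦ γ s * velocity α (u s)), sub_add_cancel]
  exact h.eq_add_integral h.left_mem (hmaps ht)

lemma const_mul (h : AdmissiblePair α a b γ u) {A : Matrix (Fin 3) (Fin 3) ℝ} (hA : A ∈ SO₃) :
    AdmissiblePair α a b (fun t ↦ A * γ t) u := by
  refine of_eq_add_integral h.hab h.humeas h.hubound (fun t ht ↦ mul_mem hA (h.mem_SO₃ ht))
    (h.hcont.const_mul A) fun t ht ↦ ?_
  have hint := (ContinuousLinearMap.mul ℝ _ A).intervalIntegral_comp_comm
    (h.intervalIntegrable h.left_mem ht)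
  simp only [ContinuousLinearMap.mul_apply', ← Matrix.mul_assoc] at hint
  rw [hint, ← Matrix.mul_add, ← h.eq_add_integral h.left_mem ht]

lemma congr (h : AdmissiblePair α a b γ u) (hγ : EqOn γ' γ (Icc a b)) (hu' : Measurable u')
    (hu₁ : ∀ t ∈ Icc a b, |u' t| ≤ 1) (hu : EqOn u' u (Ioc a b)) :
    AdmissiblePair α a b γ' u' := by
  refine of_eq_add_integral h.hab hu' hu₁ (fun t ht ↦ (hγ ht).symm ▸ h.mem_SO₃ ht)
    (h.hcont.congr hγ) fun t ht ↦ ?_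
  rw [hγ ht, hγ h.left_mem, h.eq_add_integral h.left_mem ht]
  refine congrArg _ (integral_congr_ae (.of_forall fun s hs ↦ ?_))
  have hs' : s ∈ Ioc a b := Ioc_subset_Ioc_right ht.2 (uIoc_of_le ht.1 ▸ hs)
  simp only [hγ (Ioc_subset_Icc_self hs'), hu hs']

lemma trans (h : AdmissiblePair α a b γ u) (h' : AdmissiblePair α b c γ u) :
    AdmissiblePair α a c γ u := by
  have hunion : Icc a c = Icc a b ∪ Icc b c := (Icc_union_Icc_eq_Icc h.hab h'.hab).symm
  refine of_eq_add_integral (h.hab.trans h'.hab) h.humeas ?_ ?_ ?_ ?_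
  · exact fun t ht ↦ (hunion ▸ ht).elim (h.hubound t) (h'.hubound t)
  · exact fun t ht ↦ (hunion ▸ ht).elim h.mem_SO₃ h'.mem_SO₃
  · exact hunion ▸ h.hcont.union_of_isClosed h'.hcont isClosed_Icc isClosed_Icc
  · intro t ht
    rcases hunion ▸ ht with ht | ht
    · exact h.eq_add_integral h.left_mem ht
    · rw [h'.eq_add_integral h'.left_mem ht, h.eq_add_integral h.left_mem h.right_mem, add_assoc,
        integral_add_adjacent_intervals (h.intervalIntegrable h.left_mem h.right_mem)
          (h'.intervalIntegrable h'.left_mem ht)]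

lemma exists_concat (h : AdmissiblePair α a b γ u) (h' : AdmissiblePair α b c γ' u')
    (hb : γ b = γ' b) :
    ∃ γ'' u'', AdmissiblePair α a c γ'' u'' ∧ EqOn γ'' γ (Icc a b) ∧ EqOn γ'' γ' (Icc b c) ∧
      EqOn u'' u (Icc a b) ∧ EqOn u'' u' (Ioc b c) := by
  have hr {X : Type} {f g : ℝ → X} {t : ℝ} (ht : t ∈ Ioc b c) : (Iic b).piecewise f g t = g t :=
    piecewise_eq_of_notMem _ _ _ (notMem_Iic.2 ht.1)
  have hl {X : Type} {f g : ℝ → X} {t : ℝ} (ht : t ∈ Icc a b) : (Iic b).piecewise f g t = f t :=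
    piecewise_eq_of_mem _ _ _ ht.2
  have hγ : EqOn ((Iic b).piecewise γ γ') γ' (Icc b c) := fun t ht ↦
    ht.1.eq_or_lt.elim (fun h₀ ↦ h₀ ▸ (hl h.right_mem).trans hb) fun hlt ↦ hr ⟨hlt, ht.2⟩
  have hmeas : Measurable ((Iic b).piecewise u u') :=
    h.humeas.piecewise measurableSet_Iic h'.humeas
  have hleft : AdmissiblePair α a b ((Iic b).piecewise γ γ') ((Iic b).piecewise u u') :=
    h.congr (fun t ht ↦ hl ht) hmeas (fun t ht ↦ (hl ht).symm ▸ h.hubound t ht)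
      fun t ht ↦ hl (Ioc_subset_Icc_self ht)
  refine ⟨_, _, hleft.trans (h'.congr hγ hmeas (fun t ht ↦ ?_) fun t ht ↦ hr ht),
    fun t ht ↦ hl ht, hγ, fun t ht ↦ hl ht, fun t ht ↦ hr ht⟩
  rcases ht.1.eq_or_lt with rfl | hlt
  · exact hleft.hubound b hleft.right_mem
  · exact hr ⟨hlt, ht.2⟩ ▸ h'.hubound t ht

/-- The half turn about the second axis. It conjugates every velocity of `(Σ)` to its opposite,
which is how reversed trajectories are made admissible. -/
def reverser : Matrix (Fin 3) (Fin 3) ℝ := diagonal ![-1, 1, -1]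

lemma reverser_mul_self : reverser * reverser = 1 := by
  rw [reverser, diagonal_mul_diagonal, ← diagonal_one]
  congr 1
  ext i
  fin_cases i <;> simp

lemma reverser_mem_SO₃ : reverser ∈ SO₃ := by
  refine mem_specialOrthogonalGroup_iff.2 ⟨(mem_orthogonalGroup_iff _ _).2 ?_, ?_⟩
  · exact (congrArg (reverser * ·) (diagonal_transpose _)).trans reverser_mul_self
  · simp [reverser, Fin.prod_univ_three]

lemma velocity_mul_reverser (α v : ℝ) : velocity α v * reverser = -(reverser * velocity α v) := by
  rw [velocity_eq, reverser]
  ext i j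
  fin_cases i <;> fin_cases j <;> simp

lemma reverse (h : AdmissiblePair α a b γ u) :
    AdmissiblePair α (-b) (-a) (fun t ↦ γ (-t) * reverser) (fun t ↦ u (-t)) := by
  have hmaps : MapsTo (fun t ↦ -t) (Icc (-b) (-a)) (Icc a b) := fun t ht ↦
    ⟨le_neg.1 ht.2, neg_le.1 ht.1⟩
  refine of_eq_add_integral (neg_le_neg h.hab) (h.humeas.comp measurable_neg)
    (fun t ht ↦ h.hubound _ (hmaps ht)) (fun t ht ↦ mul_mem (h.mem_SO₃ (hmaps ht)) reverser_mem_SO₃)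
    ((h.hcont.comp (by fun_prop) hmaps).mul_const reverser) fun t ht ↦ ?_
  have hint := ((ContinuousLinearMap.mul ℝ _).flip reverser).intervalIntegral_comp_comm
    (h.intervalIntegrable (hmaps ht) h.right_mem)
  simp only [ContinuousLinearMap.flip_apply, ContinuousLinearMap.mul_apply', Matrix.mul_assoc,
    velocity_mul_reverser, Matrix.mul_neg, intervalIntegral.integral_neg] at hint
  simp only [Matrix.mul_assoc, integral_comp_neg fun s ↦ γ s * (reverser * velocity α (u s))]
  rw [neg_neg, h.eq_add_integral (hmaps ht) h.right_mem, Matrix.add_mul, ← hint,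
    neg_add_cancel_right]

end AdmissiblePair

section Regularity

lemma absolutelyContinuousOnInterval_of_dist_le {X Y : Type*} [PseudoMetricSpace X]
    [PseudoMetricSpace Y] {f : ℝ → X} {g : ℝ → Y} {a b : ℝ}
    (hf : AbsolutelyContinuousOnInterval f a b)
    (h : ∀ x ∈ uIcc a b, ∀ y ∈ uIcc a b, dist (g x) (g y) ≤ dist (f x) (f y)) :
    AbsolutelyContinuousOnInterval g a b := by
  rw [absolutelyContinuousOnInterval_iff] at hf ⊢
  intro ε hε
  obtain ⟨δ, hδ, hfδ⟩ := hf ε hε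
  refine ⟨δ, hδ, fun E hE hlen ↦ (Finset.sum_le_sum fun i hi ↦ ?_).trans_lt (hfδ E hE hlen)⟩
  exact h _ (hE.1 i hi).1 _ (hE.1 i hi).2

variable {α v : ℝ} {A : Matrix (Fin 3) (Fin 3) ℝ} {i : Fin 3}

lemma mul_velocity_apply_zero : (A * velocity α v) i 0 = -(cos α * A i 1) := by
  simp [velocity_eq, mul_apply, Fin.sum_univ_three, mul_comm]

lemma mul_velocity_apply_one :
    (A * velocity α v) i 1 = cos α * A i 0 - v * sin α * A i 2 := by
  simp [velocity_eq, mul_apply, Fin.sum_univ_three]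
  ring

lemma mul_velocity_apply_two : (A * velocity α v) i 2 = v * sin α * A i 1 := by
  simp [velocity_eq, mul_apply, Fin.sum_univ_three, mul_comm]

lemma transpose_velocity (α v : ℝ) : (velocity α v)ᵀ = -velocity α v := by
  rw [velocity_eq]
  ext i j
  fin_cases i <;> fin_cases j <;> simp

end Regularity

lemma hasDerivAt_mul_rot {X : Matrix (Fin 3) (Fin 3) ℝ} (β ω p t : ℝ) :
    HasDerivAt (fun t ↦ X * rot β (ω * (t - p))) (X * rot β (ω * (t - p)) * ω • generator β) t := by
  have hlin : HasDerivAt (fun t ↦ ω * (t - p)) ω t := by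
    simpa using ((hasDerivAt_id t).sub_const p).const_mul ω
  refine (((hasDerivAt_rot β _).scomp t hlin).const_mul X).congr_deriv ?_
  simp only [Matrix.mul_assoc, Matrix.mul_smul]

namespace AdmissiblePair

variable {α a b v ω β : ℝ} {γ γ' : ℝ → Matrix (Fin 3) (Fin 3) ℝ} {u u' : ℝ → ℝ}

lemma continuousOn_apply (h : AdmissiblePair α a b γ u) (i j : Fin 3) :
    ContinuousOn (fun t ↦ γ t i j) (Icc a b) :=
  continuousOn_pi.1 (continuousOn_pi.1 h.hcont i) j

lemma absolutelyContinuousOnInterval_apply (h : AdmissiblePair α a b γ u) (i j : Fin 3) :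
    AbsolutelyContinuousOnInterval (fun t ↦ γ t i j) a b := by
  have hint : IntervalIntegrable (fun s ↦ (γ s * velocity α (u s)) i j) volume a b :=
    let L := LinearMap.toContinuousLinearMap (entryLinearMap ℝ ℝ i j)
    have hint := h.intervalIntegrable h.left_mem h.right_mem
    ⟨L.integrable_comp hint.1, L.integrable_comp hint.2⟩
  refine absolutelyContinuousOnInterval_of_dist_le
    (hint.absolutelyContinuousOnInterval_intervalIntegral (c := a) (by simp)) fun x hx y hy ↦ ?_
  rw [uIcc_of_le h.hab] at hx hy
  rw [h.hode x hx i j, h.hode y hy i j, dist_add_left]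
  rfl

lemma ae_hasDerivAt (h : AdmissiblePair α a b γ u) :
    ∀ᵐ t ∂(volume.restrict (Icc a b)), HasDerivAt γ (γ t * velocity α (u t)) t := by
  have hne (c : ℝ) : ∀ᵐ t, t ≠ c := compl_mem_ae_iff.2 (measure_singleton c)
  rw [ae_restrict_iff' measurableSet_Icc]
  filter_upwards [(h.intervalIntegrable h.left_mem h.right_mem).ae_hasDerivAt_integral, hne a,
    hne b] with t ht hta htb htI
  rw [uIcc_of_le h.hab] at ht
  refine ((ht htI a h.left_mem).const_add (γ a)).congr_of_eventuallyEq ?_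
  filter_upwards [Icc_mem_nhds (htI.1.lt_of_ne' hta) (htI.2.lt_of_ne htb)] with s hs
  exact h.eq_add_integral h.left_mem hs

lemma ae_hasDerivAt_row (h : AdmissiblePair α a b γ u) (i : Fin 3) :
    ∀ᵐ t ∂(volume.restrict (Icc a b)),
      HasDerivAt (fun s ↦ γ s i 0) (-(cos α * γ t i 1)) t ∧
      HasDerivAt (fun s ↦ γ s i 1) (cos α * γ t i 0 - u t * sin α * γ t i 2) t ∧
      HasDerivAt (fun s ↦ γ s i 2) (u t * sin α * γ t i 1) t := by
  filter_upwards [h.ae_hasDerivAt] with t ht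
  have hrow := fun j ↦ hasDerivAt_pi.1 (hasDerivAt_pi.1 ht i) j
  exact ⟨mul_velocity_apply_zero ▸ hrow 0, mul_velocity_apply_one ▸ hrow 1,
    mul_velocity_apply_two ▸ hrow 2⟩

/-- The derivative of `γ * γ'ᵀ` vanishes because the velocities are skew-symmetric. -/
lemma mul_transpose_eq (h : AdmissiblePair α a b γ u) (h' : AdmissiblePair α a b γ' u')
    (hu : ∀ᵐ t ∂(volume.restrict (Icc a b)), u t = u' t) {t : ℝ} (ht : t ∈ Icc a b) :
    γ t * (γ' t)ᵀ = γ a * (γ' a)ᵀ := by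
  have hderiv : ∀ᵐ t ∂(volume.restrict (Icc a b)), HasDerivAt (fun s ↦ γ s * (γ' s)ᵀ) 0 t := by
    filter_upwards [h.ae_hasDerivAt, h'.ae_hasDerivAt, hu] with t hγ hγ' hut
    have hγ'T : HasDerivAt (fun s ↦ (γ' s)ᵀ) (γ' t * velocity α (u' t))ᵀ t :=
      hasDerivAt_pi.2 fun i ↦ hasDerivAt_pi.2 fun j ↦ hasDerivAt_pi.1 (hasDerivAt_pi.1 hγ' j) i
    refine (hγ.mul hγ'T).congr_deriv ?_
    rw [hut, transpose_mul, transpose_velocity, Matrix.neg_mul, Matrix.mul_neg, Matrix.mul_assoc,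
      add_neg_cancel]
  ext i j
  have hac : AbsolutelyContinuousOnInterval (fun s ↦ (γ s * (γ' s)ᵀ) i j) a b := by
    have hterm (k : Fin 3) := (h.absolutelyContinuousOnInterval_apply i k).fun_mul
      (h'.absolutelyContinuousOnInterval_apply j k)
    simp only [mul_apply, transpose_apply, Fin.sum_univ_three]
    exact ((hterm 0).add (hterm 1)).add (hterm 2)
  obtain ⟨C, hC⟩ := hac.const_of_ae_hasDerivAt_zero <| by
    rw [uIcc_of_le h.hab, ← ae_restrict_iff' measurableSet_Icc]
    exact hderiv.mono fun s hs ↦ hasDerivAt_pi.1 (hasDerivAt_pi.1 hs i) j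
  rw [uIcc_of_le h.hab] at hC
  exact (hC t ht).trans (hC a h.left_mem).symm

lemma mul_rot {X : Matrix (Fin 3) (Fin 3) ℝ} (hX : X ∈ SO₃) (hab : a ≤ b)
    (hv : |v| ≤ 1) (hc : ω * cos β = cos α) (hs : ω * sin β = v * sin α) :
    AdmissiblePair α a b (fun t ↦ X * rot β (ω * (t - a))) (fun _ ↦ v) := by
  have hcont : Continuous fun t ↦ X * rot β (ω * (t - a)) :=
    continuous_iff_continuousAt.2 fun t ↦ (hasDerivAt_mul_rot β ω a t).continuousAt
  refine .of_eq_add_integral hab measurable_const (fun _ _ ↦ hv)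
    (fun t _ ↦ mul_mem hX (rot_mem_SO₃ _ _)) hcont.continuousOn fun t _ ↦ ?_
  rw [velocity_eq_smul_generator hc hs, integral_eq_sub_of_hasDerivAt
    (fun s _ ↦ hasDerivAt_mul_rot β ω a s) ((hcont.mul continuous_const).intervalIntegrable _ _),
    add_sub_cancel]

lemma eq_mul_rot (h : AdmissiblePair α a b γ u)
    (hu : ∀ᵐ t ∂(volume.restrict (Icc a b)), u t = v) (hv : |v| ≤ 1)
    (hc : ω * cos β = cos α) (hs : ω * sin β = v * sin α) {t : ℝ} (ht : t ∈ Icc a b) :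
    γ t = γ a * rot β (ω * (t - a)) := by
  have harc := mul_rot (h.mem_SO₃ h.left_mem) h.hab hv hc hs
  have heq := h.mul_transpose_eq harc hu ht
  rw [sub_self, mul_zero, rot_zero, Matrix.mul_one,
    mul_transpose_of_mem_specialOrthogonalGroup (h.mem_SO₃ h.left_mem)] at heq
  rw [← Matrix.mul_one (γ t), ← transpose_mul_of_mem_specialOrthogonalGroup (harc.mem_SO₃ ht),
    ← Matrix.mul_assoc, heq, Matrix.one_mul]

lemma eq_mul_rot_zero (h : AdmissiblePair α a b γ u)
    (hu : ∀ᵐ t ∂(volume.restrict (Icc a b)), u t = 0) {t : ℝ} (ht : t ∈ Icc a b) :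
    γ t = γ a * rot 0 (cos α * (t - a)) :=
  h.eq_mul_rot hu (by simp) (by simp) (by simp) ht

lemma eq_mul_rot_of_abs_eq_one (h : AdmissiblePair α a b γ u) {ε : ℝ} (hε : |ε| = 1)
    (hu : ∀ᵐ t ∂(volume.restrict (Icc a b)), u t = ε) {t : ℝ} (ht : t ∈ Icc a b) :
    γ t = γ a * rot (ε * α) (t - a) := by
  rw [h.eq_mul_rot hu hε.le (ω := 1) (β := ε * α) (by rw [one_mul, cos_mul_of_abs_eq_one hε])
    (by rw [one_mul, sin_mul_of_abs_eq_one hε]) ht, one_mul]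

end AdmissiblePair

section Reach

/-- `Reach α T X Y` means that `(Σ)` can be steered from `X` to `Y` in time exactly `T`. -/
def Reach (α T : ℝ) (X Y : Matrix (Fin 3) (Fin 3) ℝ) : Prop :=
  ∃ γ u, AdmissiblePair α 0 T γ u ∧ γ 0 = X ∧ γ T = Y

variable {α a b T T' : ℝ} {X Y Z A : Matrix (Fin 3) (Fin 3) ℝ}
  {γ γ' : ℝ → Matrix (Fin 3) (Fin 3) ℝ} {u u' : ℝ → ℝ}

lemma AdmissiblePair.reach (h : AdmissiblePair α a b γ u) : Reach α (b - a) (γ a) (γ b) :=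
  ⟨_, _, sub_self a ▸ h.comp_add_right a, by simp, by simp⟩

namespace Reach

lemma trans (h : Reach α T X Y) (h' : Reach α T' Y Z) : Reach α (T + T') X Z := by
  obtain ⟨γ, u, hγ, rfl, rfl⟩ := h
  obtain ⟨γ', u', hγ', hY, rfl⟩ := h'
  have hshift := hγ'.comp_add_right (-T)
  rw [zero_sub, neg_neg, sub_neg_eq_add, add_comm T'] at hshift
  obtain ⟨γ'', u'', hγ'', hl, hr, -⟩ := hγ.exists_concat hshift (by simp [hY])
  exact ⟨γ'', u'', hγ'', hl hγ.left_mem, by simp [hr hshift.right_mem]⟩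

lemma const_mul (h : Reach α T X Y) (hA : A ∈ SO₃) : Reach α T (A * X) (A * Y) := by
  obtain ⟨γ, u, hγ, rfl, rfl⟩ := h
  exact ⟨_, _, hγ.const_mul hA, rfl, rfl⟩

lemma mul_reverser (h : Reach α T X Y) :
    Reach α T (Y * AdmissiblePair.reverser) (X * AdmissiblePair.reverser) := by
  obtain ⟨γ, u, hγ, rfl, rfl⟩ := h
  simpa using hγ.reverse.reach

lemma mul_rot {β θ : ℝ} (hα : α ∈ Ioo 0 (π / 2)) (hβ : |β| ≤ α) (hX : X ∈ SO₃) (hT : 0 ≤ T)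
    (hθ : θ * cos β = T * cos α) : Reach α T X (X * rot β θ) := by
  have hsα : 0 < sin α := sin_pos_of_mem_Ioo_zero_pi_div_two hα
  have hcβ : 0 < cos β :=
    cos_pos_of_mem_Ioo ⟨by linarith [neg_abs_le β, hα.2], by linarith [le_abs_self β, hα.2]⟩
  have hcontrol : |cos α / cos β * sin β / sin α| ≤ 1 := by
    have hsin : 0 ≤ sin (α - |β|) :=
      sin_nonneg_of_nonneg_of_le_pi (by linarith) (by linarith [hα.2, abs_nonneg β])
    rw [sin_sub, cos_abs] at hsin
    have hcα : 0 < cos α := cos_pos_of_mem_Ioo_zero_pi_div_two hα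
    have : |sin β| = sin |β| := abs_sin_eq_sin_abs_of_abs_le_pi (by linarith [hα.1, hα.2])
    rw [abs_div, abs_mul, abs_div, abs_of_pos hcα, abs_of_pos hcβ, abs_of_pos hsα, this,
      div_le_one hsα, div_mul_eq_mul_div, div_le_iff₀ hcβ]
    linarith
  have h := (AdmissiblePair.mul_rot hX hT hcontrol (div_mul_cancel₀ _ hcβ.ne')
    (div_mul_cancel₀ _ hsα.ne').symm).reach
  have hθ' : cos α / cos β * T = θ := by field_simp; linarith
  simpa only [sub_self, mul_zero, rot_zero, Matrix.mul_one, hθ', sub_zero] using h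

end Reach

lemma timeOptimal_iff_forall_reach : TimeOptimal α a b γ u ↔
    AdmissiblePair α a b γ u ∧ ∀ T, Reach α T (γ a) (γ b) → b - a ≤ T := by
  refine and_congr_right fun _ ↦
    ⟨fun h T ⟨γ', u', hγ', ha, hb⟩ ↦ ?_, fun h a' b' γ' u' hγ' ha hb ↦ ?_⟩
  · simpa using h 0 T γ' u' hγ' ha hb
  · exact h _ (ha ▸ hb ▸ hγ'.reach)

namespace TimeOptimal

lemma le_of_reach (h : TimeOptimal α a b γ u) (hT : Reach α T (γ a) (γ b)) : b - a ≤ T :=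
  (timeOptimal_iff_forall_reach.1 h).2 T hT

lemma congr_endpoints (h : TimeOptimal α a b γ u) (h' : AdmissiblePair α a b γ' u')
    (ha : γ' a = γ a) (hb : γ' b = γ b) : TimeOptimal α a b γ' u' :=
  timeOptimal_iff_forall_reach.2 ⟨h', fun _ hT ↦ h.le_of_reach (ha ▸ hb ▸ hT)⟩

lemma restrict (h : TimeOptimal α a b γ u) {p q : ℝ} (hp : a ≤ p) (hpq : p ≤ q) (hq : q ≤ b) :
    TimeOptimal α p q γ u := by
  refine timeOptimal_iff_forall_reach.2 ⟨h.1.restrict hp hpq hq, fun T hT ↦ ?_⟩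
  have hbefore := (h.1.restrict le_rfl hp (hpq.trans hq)).reach
  have hafter := (h.1.restrict (hp.trans hpq) hq le_rfl).reach
  linarith [h.le_of_reach ((hbefore.trans hT).trans hafter)]

lemma const_mul (h : TimeOptimal α a b γ u) (hA : A ∈ SO₃) :
    TimeOptimal α a b (fun t ↦ A * γ t) u := by
  refine timeOptimal_iff_forall_reach.2 ⟨h.1.const_mul hA, fun T hT ↦ h.le_of_reach ?_⟩
  simpa only [← Matrix.mul_assoc, transpose_mul_of_mem_specialOrthogonalGroup hA,
    Matrix.one_mul] using hT.const_mul (transpose_mem_specialOrthogonalGroup hA)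

lemma reverse (h : TimeOptimal α a b γ u) :
    TimeOptimal α (-b) (-a) (fun t ↦ γ (-t) * AdmissiblePair.reverser) (fun t ↦ u (-t)) := by
  refine timeOptimal_iff_forall_reach.2 ⟨h.1.reverse, fun T hT ↦ ?_⟩
  have := h.le_of_reach (by
    simpa only [neg_neg, Matrix.mul_assoc, AdmissiblePair.reverser_mul_self, Matrix.mul_one]
      using hT.mul_reverser)
  linarith

lemma injOn (h : TimeOptimal α a b γ u) : InjOn γ (Icc a b) := by
  suffices ∀ p ∈ Icc a b, ∀ q ∈ Icc a b, p < q → γ p ≠ γ q from fun p hp q hq heq ↦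
    by_contra fun hne : p ≠ q ↦
      hne.lt_or_gt.elim (this p hp q hq · heq) (this q hq p hp · heq.symm)
  intro p hp q hq hpq heq
  have hstay := (h.1.restrict hp.1 le_rfl hp.2).reach
  rw [sub_self] at hstay
  have := (h.restrict hp.1 hpq.le hq.2).le_of_reach (T := 0) (by rwa [← heq])
  linarith

end TimeOptimal

end Reach

section Maximality

variable {α a b s t v θ : ℝ} {γ : ℝ → Matrix (Fin 3) (Fin 3) ℝ} {u : ℝ → ℝ}

lemma exists_reach_compensator {X : Matrix (Fin 3) (Fin 3) ℝ} (hα : α ∈ Ioo 0 (π / 2))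
    (hX : X ∈ SO₃) (hθ : 0 ≤ θ) {p : ℝ × ℝ × ℝ} (h₁ : |p.1| ≤ α) (h₂ : |p.2.1| ≤ α)
    (h₃ : -θ ≤ p.2.2) :
    ∃ T ≤ (3 * θ + p.2.2) / cos α,
      Reach α T (X * rot 0 (-θ)) (X * compensator θ p * rot 0 (2 * θ)) := by
  have hcα : 0 < cos α := cos_pos_of_mem_Ioo_zero_pi_div_two hα
  have htilt {β : ℝ} (hβ : |β| ≤ α) {Y : Matrix (Fin 3) (Fin 3) ℝ} (hY : Y ∈ SO₃) :
      ∃ T ≤ θ / cos α, Reach α T Y (Y * rot β θ) := by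
    have hcβ : 0 ≤ cos β := cos_nonneg_of_neg_pi_div_two_le_of_le
      (by linarith [neg_abs_le β, hα.2]) (by linarith [le_abs_self β, hα.2])
    exact ⟨θ * cos β / cos α, by gcongr; exact mul_le_of_le_one_right hθ (cos_le_one β),
      .mul_rot hα hβ hY (by positivity) (by field_simp)⟩
  have hX₀ := mul_mem hX (rot_mem_SO₃ 0 (-θ))
  have hX₁ := mul_mem hX₀ (rot_mem_SO₃ p.1 θ)
  obtain ⟨T₁, hT₁, hR₁⟩ := htilt h₁ hX₀
  obtain ⟨T₂, hT₂, hR₂⟩ := htilt h₂ hX₁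
  have hR₃ : Reach α ((θ + p.2.2) / cos α) _ _ := .mul_rot hα (β := 0) (θ := θ + p.2.2)
    (by simpa using hα.1.le) (mul_mem hX₁ (rot_mem_SO₃ p.2.1 θ))
    (div_nonneg (by linarith) hcα.le) (by simp [hcα.ne'])
  refine ⟨T₁ + T₂ + (θ + p.2.2) / cos α, ?_, ?_⟩
  · have : (3 * θ + p.2.2) / cos α = θ / cos α + θ / cos α + (θ + p.2.2) / cos α := by ring
    linarith
  · have hend : rot 0 (-θ) * rot 0 p.2.2 * rot 0 (2 * θ) = rot 0 (θ + p.2.2) := by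
      rw [← rot_add, ← rot_add]
      congr 1
      ring
    convert (hR₁.trans hR₂).trans hR₃ using 1
    simp only [compensator, Matrix.mul_assoc, ← hend]

lemma velocity_eq_generator_mul (hv : |v| = 1) : velocity α v = generator (v * α) := by
  rcases eq_or_eq_neg_of_abs_eq hv with rfl | rfl <;> simp [velocity_eq, generator_eq]

lemma hasDerivAt_needle (hv : |v| = 1) {w : ℝ}
    (hγ : HasDerivAt γ (γ t * velocity α w) t) :
    HasDerivAt (fun η ↦ γ (t + η) * rot (v * α) (-η) * (γ t)ᵀ)
      ((w - v) • (γ t * gM α * (γ t)ᵀ)) 0 := by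
  have hshift : HasDerivAt (fun η ↦ γ (t + η)) (γ t * velocity α w) 0 :=
    HasDerivAt.comp_const_add t 0 (by rwa [add_zero])
  have hrot : HasDerivAt (fun η ↦ rot (v * α) (-η)) (-velocity α v) 0 := by
    have := (hasDerivAt_rot (v * α) (-0)).scomp 0 (hasDerivAt_neg 0)
    simpa [rot_zero, velocity_eq_generator_mul hv, Function.comp_def] using this
  refine ((hshift.mul hrot).mul_const (γ t)ᵀ).congr_deriv ?_
  have hdiff : velocity α w - velocity α v = (w - v) • gM α := by
    simp only [velocity, sub_smul]
    abel
  rw [neg_zero, rot_zero, add_zero, Matrix.mul_one, Matrix.mul_neg, ← sub_eq_add_neg,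
    ← Matrix.mul_sub, hdiff, Matrix.mul_smul, Matrix.smul_mul]

lemma conj_rot_zero_apply_zero_one {A : Matrix (Fin 3) (Fin 3) ℝ} (hA : A ∈ SO₃) (w : ℝ) :
    ((rot 0 θ)ᵀ * (w • (A * gM α * Aᵀ)) * rot 0 θ) 0 1 = w * (sin α * A 2 0) := by
  have hconj := conj_gM_apply_zero_one_of_mem_SO₃
    (mul_mem (transpose_mem_specialOrthogonalGroup hA) (rot_mem_SO₃ 0 θ)) α
  have haxis : (Aᵀ * rot 0 θ) 0 2 = A 2 0 := by
    simp [rot_eq, mul_apply, Fin.sum_univ_three]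
  rw [transpose_mul, transpose_transpose, haxis] at hconj
  rw [Matrix.mul_smul, Matrix.smul_mul, Matrix.smul_apply, smul_eq_mul, ← hconj]
  simp only [Matrix.mul_assoc]

lemma AdmissiblePair.needle_mem_SO₃ (h : AdmissiblePair α a b γ u) (ht : t ∈ Icc a b) {η : ℝ}
    (hη : t + η ∈ Icc a b) : γ (t + η) * rot (v * α) (-η) * (γ t)ᵀ ∈ SO₃ :=
  mul_mem (mul_mem (h.mem_SO₃ hη) (rot_mem_SO₃ _ _))
    (transpose_mem_specialOrthogonalGroup (h.mem_SO₃ ht))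

lemma AdmissiblePair.eventually_exists_compensator_eq_needle (h : AdmissiblePair α a b γ u)
    (hα : α ∈ Ioo 0 (π / 2)) (hθ : θ ∈ Ioo 0 π) (ht : t ∈ Ioo a b) (hv : |v| = 1)
    (hγ : HasDerivAt γ (γ t * velocity α (u t)) t) (hpos : 0 < (v - u t) * γ t 2 0) :
    ∀ᶠ η in 𝓝[>] 0, ∃ p : ℝ × ℝ × ℝ, |p.1| ≤ α ∧ |p.2.1| ≤ α ∧ -θ ≤ p.2.2 ∧ p.2.2 < 0 ∧
      compensator θ p = (rot 0 θ)ᵀ * (γ (t + η) * rot (v * α) (-η) * (γ t)ᵀ) * rot 0 θ := by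
  have hθSO := rot_mem_SO₃ 0 θ
  have htSO := h.mem_SO₃ (Ioo_subset_Icc_self ht)
  have hsα : 0 < sin α := sin_pos_of_mem_Ioo_zero_pi_div_two hα
  have hmem : ∀ᶠ η in 𝓝 (0 : ℝ), t + η ∈ Icc a b :=
    (continuous_const_add t).continuousAt.eventually_mem (by simpa using Icc_mem_nhds ht.1 ht.2)
  have hnear : Icc (-α) α ×ˢ Icc (-α) α ×ˢ Ici (-θ) ∈ 𝓝 (0 : ℝ × ℝ × ℝ) :=
    prod_mem_nhds (Icc_mem_nhds (by simpa using hα.1) hα.1)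
      (prod_mem_nhds (Icc_mem_nhds (by simpa using hα.1) hα.1) (Ici_mem_nhds (by simpa using hθ.1)))
  have hcomp := eventually_exists_compensator_eq hθ (S := Icc (-α) α ×ˢ Icc (-α) α ×ˢ Ici (-θ))
    (hmem.mono fun η hη ↦ mul_mem (mul_mem (transpose_mem_specialOrthogonalGroup hθSO)
      (h.needle_mem_SO₃ (Ioo_subset_Icc_self ht) hη)) hθSO)
    (by simp [rot_zero, mul_transpose_of_mem_specialOrthogonalGroup htSO,
      transpose_mul_of_mem_specialOrthogonalGroup hθSO])
    (((hasDerivAt_needle hv hγ).const_mul (rot 0 θ)ᵀ).mul_const (rot 0 θ))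
    (by rw [conj_rot_zero_apply_zero_one htSO]; nlinarith) hnear
  filter_upwards [hcomp] with η ⟨p, ⟨hp₁, hp₂, hp₃⟩, hτ, hp⟩
  exact ⟨p, abs_le.2 hp₁, abs_le.2 hp₂, hp₃, hτ, hp⟩

/-- The competitor of the needle variation: compensate on the singular arc, follow `γ` up to a left
translation until time `t`, then use the control `v` for time `η`. -/
lemma AdmissiblePair.exists_reach_needle (h : AdmissiblePair α a b γ u) (hα : α ∈ Ioo 0 (π / 2))
    (h₁ : γ a = 1) (hs : s ∈ Icc a t) (hγs : γ s = rot 0 (3 * θ)) (ht : t ≤ b) (hθ : 0 ≤ θ)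
    (hv : |v| = 1) {η : ℝ} (hη : 0 ≤ η) {W : Matrix (Fin 3) (Fin 3) ℝ} (hW : W ∈ SO₃)
    {p : ℝ × ℝ × ℝ} (hp₁ : |p.1| ≤ α) (hp₂ : |p.2.1| ≤ α) (hp₃ : -θ ≤ p.2.2)
    (hp : compensator θ p = (rot 0 θ)ᵀ * W * rot 0 θ) :
    ∃ T ≤ (3 * θ + p.2.2) / cos α + (t - s) + η,
      Reach α T (γ a) (W * γ t * rot (v * α) η) := by
  have hθSO := rot_mem_SO₃ 0 θ
  obtain ⟨T, hT, hR⟩ := exists_reach_compensator hα hθSO hθ hp₁ hp₂ hp₃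
  have hstart : rot 0 θ * rot 0 (-θ) = γ a := by rw [rot_mul_neg, h₁]
  have hend : rot 0 θ * compensator θ p * rot 0 (2 * θ) = W * γ s := by
    rw [hp, hγs, show 3 * θ = θ + 2 * θ by ring, rot_add]
    simp only [← Matrix.mul_assoc, mul_transpose_of_mem_specialOrthogonalGroup hθSO, Matrix.one_mul]
  rw [hstart, hend] at hR
  have hfollow := ((h.restrict hs.1 hs.2 ht).const_mul hW).reach
  have hbang : Reach α η (W * γ t) (W * γ t * rot (v * α) η) := by
    refine .mul_rot hα ?_ (mul_mem hW (h.mem_SO₃ ⟨hs.1.trans hs.2, ht⟩)) hη ?_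
    · rw [abs_mul, hv, one_mul, abs_of_pos hα.1]
    · rcases eq_or_eq_neg_of_abs_eq hv with rfl | rfl <;> simp
  exact ⟨_, by linarith, (hR.trans hfollow).trans hbang⟩

/-- The pointwise maximum condition. The costate of the Pontryagin maximum principle is the last row
of `γ`; a needle variation violating the condition would leave some time to spare after
compensation. -/
lemma TimeOptimal.needle_le (h : TimeOptimal α a b γ u) (hα : α ∈ Ioo 0 (π / 2))
    (h₁ : γ a = 1) (hθ : θ ∈ Ioo 0 π) (hs : s ∈ Icc a t) (hsθ : (s - a) * cos α = 3 * θ)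
    (hγs : γ s = rot 0 (3 * θ)) (ht : t ∈ Ioo a b) (hv : |v| = 1)
    (hγ : HasDerivAt γ (γ t * velocity α (u t)) t) : (v - u t) * γ t 2 0 ≤ 0 := by
  by_contra! hpos
  have hcα : 0 < cos α := cos_pos_of_mem_Ioo_zero_pi_div_two hα
  have htI := Ioo_subset_Icc_self ht
  obtain ⟨η, ⟨p, hp₁, hp₂, hp₃, hτ, hp⟩, hη, htη⟩ :=
    ((h.1.eventually_exists_compensator_eq_needle hα hθ ht hv hγ hpos).and
      (Ioo_mem_nhdsGT (sub_pos.2 ht.2))).exists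
  have htηI : t + η ∈ Icc a b := ⟨by linarith [ht.1], by linarith⟩
  obtain ⟨T, hT, hR⟩ := h.1.exists_reach_needle hα h₁ hs hγs ht.2.le hθ.1.le hv hη.le
    (h.1.needle_mem_SO₃ htI htηI) hp₁ hp₂ hp₃ hp
  have hend : γ (t + η) * rot (v * α) (-η) * (γ t)ᵀ * γ t * rot (v * α) η = γ (t + η) := by
    rw [Matrix.mul_assoc _ (γ t)ᵀ, transpose_mul_of_mem_specialOrthogonalGroup (h.1.mem_SO₃ htI),
      Matrix.mul_one, Matrix.mul_assoc, rot_neg_mul, Matrix.mul_one]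
  have hle := (h.restrict le_rfl htηI.1 htηI.2).le_of_reach (hend ▸ hR)
  have hgain : p.2.2 / cos α < 0 := div_neg_of_neg_of_pos hτ hcα
  rw [add_div, ← hsθ, mul_div_cancel_right₀ _ hcα.ne'] at hT
  linarith

lemma TimeOptimal.ae_mul_eq_abs {d : ℝ} (h : TimeOptimal α a b γ u) (hα : α ∈ Ioo 0 (π / 2))
    (h₁ : γ a = 1) (had : a < d) (hdb : d ≤ b)
    (hu : ∀ᵐ t ∂(volume.restrict (Icc a d)), u t = 0) :
    ∀ᵐ t ∂(volume.restrict (Icc a b)), u t * γ t 2 0 = |γ t 2 0| := by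
  have hcα : 0 < cos α := cos_pos_of_mem_Ioo_zero_pi_div_two hα
  have hne (c : ℝ) : ∀ᵐ t ∂(volume.restrict (Icc a b)), t ≠ c :=
    ae_restrict_of_ae (compl_mem_ae_iff.2 (measure_singleton c))
  filter_upwards [h.1.ae_hasDerivAt, hne a, hne b, ae_restrict_mem measurableSet_Icc]
    with t hγ hta htb ht
  have ht' : t ∈ Ioo a b := ⟨ht.1.lt_of_ne' hta, ht.2.lt_of_ne htb⟩
  obtain ⟨s, has, hs⟩ : ∃ s, a < s ∧ s < min (min d t) (a + π / cos α) :=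
    exists_between (by simp [had, ht'.1, hcα, pi_pos])
  simp only [lt_min_iff] at hs
  obtain ⟨⟨hsd, hst⟩, hsπ⟩ := hs
  have hθ : (s - a) * cos α / 3 ∈ Ioo 0 π := by
    have : (s - a) * cos α < π := by rwa [← lt_div_iff₀ hcα, sub_lt_iff_lt_add']
    exact ⟨by have := sub_pos.2 has; positivity, by linarith [pi_pos]⟩
  have hγs : γ s = rot 0 (3 * ((s - a) * cos α / 3)) := by
    rw [(h.1.restrict le_rfl had.le hdb).eq_mul_rot_zero hu ⟨has.le, hsd.le⟩, h₁, Matrix.one_mul]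
    congr 1
    ring
  have hmax {v : ℝ} (hv : |v| = 1) :=
    h.needle_le hα h₁ hθ ⟨has.le, hst.le⟩ (by ring) hγs ht' hv hγ
  have hu₁ := h.1.hubound t ht
  rcases abs_cases (γ t 2 0) with ⟨habs, hsign⟩ | ⟨habs, hsign⟩ <;> rw [habs]
  · nlinarith [hmax abs_one, (abs_le.1 hu₁).2]
  · nlinarith [hmax (v := -1) (by simp), (abs_le.1 hu₁).1]

end Maximality

section Extremals

lemma hasDerivAt_abs_of_mul_eq_abs {f : ℝ → ℝ} {f' w t : ℝ} (hf : HasDerivAt f f' t)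
    (habs : DifferentiableAt ℝ (fun s ↦ |f s|) t) (hw : |w| ≤ 1) (hwf : w * f t = |f t|) :
    HasDerivAt (fun s ↦ |f s|) (w * f') t := by
  have hmin : IsLocalMin (fun s ↦ |f s| - w * f s) t := .of_forall fun s ↦ by
    have : w * f s ≤ 1 * |f s| := (le_abs_self _).trans (by rw [abs_mul]; gcongr)
    linarith
  refine habs.hasDerivAt.congr_deriv ?_
  linarith [hmin.hasDerivAt_eq_zero (habs.hasDerivAt.sub (hf.const_mul w))]

lemma exists_ae_eq_const_of_ae_mul_eq_abs {f u : ℝ → ℝ} {a b : ℝ} (hf : ContinuousOn f (Ioo a b))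
    (hne : ∀ t ∈ Ioo a b, f t ≠ 0)
    (hu : ∀ᵐ t ∂(volume.restrict (Icc a b)), u t * f t = |f t|) :
    ∃ ε : ℝ, |ε| = 1 ∧ ∀ᵐ t ∂(volume.restrict (Icc a b)), u t = ε := by
  rw [← restrict_Ioo_eq_restrict_Icc] at hu ⊢
  obtain ⟨ε, hε, hsign⟩ : ∃ ε : ℝ, |ε| = 1 ∧ ∀ t ∈ Ioo a b, |f t| = ε * f t := by
    rcases isPreconnected_Ioo.eq_or_eq_neg_of_sq_eq hf.abs hf (fun t _ ↦ sq_abs (f t))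
      (hne _ ·) with h | h
    · exact ⟨1, by simp, fun t ht ↦ by simpa using h ht⟩
    · exact ⟨-1, by simp, fun t ht ↦ by simpa using h ht⟩
  refine ⟨ε, hε, ?_⟩
  filter_upwards [hu, ae_restrict_mem measurableSet_Ioo] with t hut ht
  exact mul_right_cancel₀ (hne t ht) (hut.trans (hsign t ht))

lemma exists_eq_zero_iff_le {f : ℝ → ℝ} {a b : ℝ} (hab : a ≤ b) (hf : ContinuousOn f (Icc a b))
    (ha : f a = 0) (hgap : ∀ p ∈ Icc a b, ∀ q ∈ Icc a b, p < q → f p = 0 → f q = 0 →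
      ∃ t ∈ Ioo p q, f t = 0) :
    ∃ d ∈ Icc a b, ∀ t ∈ Icc a b, f t = 0 ↔ t ≤ d := by
  have hZ : IsClosed (Icc a b ∩ f ⁻¹' {0}) :=
    hf.preimage_isClosed_of_isClosed isClosed_Icc isClosed_singleton
  have hcompact {c d : ℝ} : IsCompact (Icc c d ∩ (Icc a b ∩ f ⁻¹' {0})) :=
    isCompact_Icc.inter_right hZ
  obtain ⟨d, ⟨-, hd, hfd⟩, hlast⟩ :=
    hcompact.exists_isGreatest ⟨a, left_mem_Icc.2 hab, left_mem_Icc.2 hab, ha⟩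
  refine ⟨d, hd, fun t ht ↦ ⟨fun hft ↦ hlast ⟨ht, ht, hft⟩, fun htd ↦ by_contra fun hft ↦ ?_⟩⟩
  obtain ⟨p, ⟨hpt, hp, hfp⟩, hp_last⟩ :=
    hcompact.exists_isGreatest ⟨a, left_mem_Icc.2 ht.1, left_mem_Icc.2 hab, ha⟩
  obtain ⟨q, ⟨htq, hq, hfq⟩, hq_first⟩ :=
    hcompact.exists_isLeast ⟨d, right_mem_Icc.2 htd, hd, hfd⟩
  have hpt' : p < t := hpt.2.lt_of_ne fun h ↦ hft (h ▸ hfp)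
  have htq' : t < q := htq.1.lt_of_ne fun h ↦ hft (h ▸ hfq)
  obtain ⟨s, hs, hfs⟩ := hgap p hp q hq (hpt'.trans htq') hfp hfq
  have hsZ : s ∈ Icc a b ∩ f ⁻¹' {0} := ⟨⟨hp.1.trans hs.1.le, hs.2.le.trans hq.2⟩, hfs⟩
  rcases le_total s t with hst | hts
  · exact hs.1.not_ge (hp_last ⟨⟨hsZ.1.1, hst⟩, hsZ⟩)
  · exact hs.2.not_ge (hq_first ⟨⟨hts, hs.2.le.trans htq.2⟩, hsZ⟩)

variable {α a b t : ℝ} {γ : ℝ → Matrix (Fin 3) (Fin 3) ℝ} {u : ℝ → ℝ}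

namespace AdmissiblePair

lemma hamiltonian_eq (h : AdmissiblePair α a b γ u) {i : Fin 3}
    (hmax : ∀ᵐ t ∂(volume.restrict (Icc a b)), u t * γ t i 0 = |γ t i 0|) (ht : t ∈ Icc a b) :
    cos α * γ t i 2 + sin α * |γ t i 0| = cos α * γ a i 2 + sin α * |γ a i 0| := by
  have habs : AbsolutelyContinuousOnInterval (fun t ↦ |γ t i 0|) a b :=
    absolutelyContinuousOnInterval_of_dist_le (h.absolutelyContinuousOnInterval_apply i 0)
      fun _ _ _ _ ↦ abs_abs_sub_abs_le _ _
  have hac := ((h.absolutelyContinuousOnInterval_apply i 2).const_mul (cos α)).add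
    (habs.const_mul (sin α))
  obtain ⟨C, hC⟩ := hac.const_of_ae_hasDerivAt_zero <| by
    have hdiff := habs.ae_differentiableAt
    rw [uIcc_of_le h.hab, ← ae_restrict_iff' measurableSet_Icc] at hdiff ⊢
    filter_upwards [h.ae_hasDerivAt_row i, hdiff, hmax, ae_restrict_mem measurableSet_Icc]
      with t ⟨h₀, _, h₂⟩ hdiff hmax ht
    refine ((h₂.const_mul _).add ((hasDerivAt_abs_of_mul_eq_abs h₀ hdiff (h.hubound t ht)
      hmax).const_mul _)).congr_deriv ?_
    ring
  rw [uIcc_of_le h.hab] at hC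
  exact (hC t ht).trans (hC a h.left_mem).symm

lemma ae_eq_zero_of_apply_two_eq_one (h : AdmissiblePair α a b γ u) (hα : sin α ≠ 0) {i : Fin 3}
    (hrow : ∀ t ∈ Icc a b, γ t i 2 = 1) : ∀ᵐ t ∂(volume.restrict (Icc a b)), u t = 0 := by
  have hzero (t) (ht : t ∈ Icc a b) :=
    row_eq_zero_of_mem_SO₃_of_apply_two_eq_one (h.mem_SO₃ ht) (hrow t ht)
  have hrows := h.ae_hasDerivAt_row i
  rw [← restrict_Ioo_eq_restrict_Icc] at hrows ⊢
  filter_upwards [hrows, ae_restrict_mem measurableSet_Ioo] with t ⟨_, h₁, _⟩ ht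
  have hconst : (fun s ↦ γ s i 1) =ᶠ[𝓝 t] fun _ ↦ 0 := by
    filter_upwards [Icc_mem_nhds ht.1 ht.2] with s hs using (hzero s hs).2
  have hderiv := h₁.unique ((hasDerivAt_const t 0).congr_of_eventuallyEq hconst)
  have htI := Ioo_subset_Icc_self ht
  rw [(hzero t htI).1, hrow t htI] at hderiv
  exact (mul_eq_zero.1 (by linarith)).resolve_right hα

end AdmissiblePair

namespace TimeOptimal

lemma exists_apply_two_zero_eq_zero (h : TimeOptimal α a b γ u) (hα : sin α ≠ 0) (hab : a < b)
    (hmax : ∀ᵐ t ∂(volume.restrict (Icc a b)), u t * γ t 2 0 = |γ t 2 0|)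
    (ha : γ a 2 2 = 1) (hb : γ b 2 2 = 1) : ∃ t ∈ Ioo a b, γ t 2 0 = 0 := by
  by_contra! hne
  obtain ⟨ε, hε, hu⟩ := exists_ae_eq_const_of_ae_mul_eq_abs
    ((h.1.continuousOn_apply 2 0).mono Ioo_subset_Icc_self) hne hmax
  have hγb := h.1.eq_mul_rot_of_abs_eq_one hε hu h.1.right_mem
  obtain ⟨ha₀, ha₁⟩ := row_eq_zero_of_mem_SO₃_of_apply_two_eq_one (h.1.mem_SO₃ h.1.left_mem) ha
  have hcos : cos (b - a) = 1 := by
    have hsq : sin (ε * α) ^ 2 ≠ 0 := by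
      rw [sin_mul_of_abs_eq_one hε, mul_pow, ← sq_abs ε, hε]
      simpa using hα
    have : (1 - cos (b - a)) * sin (ε * α) ^ 2 = 0 := by
      have hentry := congrFun₂ hγb 2 2
      simp only [rot_eq, mul_apply, Fin.sum_univ_three, ha₀, ha₁, ha, hb, zero_mul, one_mul,
        zero_add, of_apply, cons_val] at hentry
      linarith
    linarith [(mul_eq_zero.1 this).resolve_right hsq]
  rw [rot, rodrigues_eq_one hcos, Matrix.mul_one] at hγb
  exact hab.ne' (h.injOn h.1.right_mem h.1.left_mem hγb)

lemma exists_singular_bang {d₀ : ℝ} (h : TimeOptimal α a b γ u) (hα : α ∈ Ioo 0 (π / 2))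
    (had₀ : a < d₀) (hd₀ : d₀ ≤ b) (hu : ∀ᵐ t ∂(volume.restrict (Icc a d₀)), u t = 0) :
    ∃ d ε : ℝ, d₀ ≤ d ∧ d ≤ b ∧ |ε| = 1 ∧ (∀ᵐ t ∂(volume.restrict (Icc a d)), u t = 0) ∧
      ∀ᵐ t ∂(volume.restrict (Icc d b)), u t = ε := by
  wlog h₁ : γ a = 1 generalizing γ
  · have ha := h.1.mem_SO₃ h.1.left_mem
    exact this (h.const_mul (transpose_mem_specialOrthogonalGroup ha))
      (transpose_mul_of_mem_specialOrthogonalGroup ha)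
  have hsα : 0 < sin α := sin_pos_of_mem_Ioo_zero_pi_div_two hα
  have hcα : 0 < cos α := cos_pos_of_mem_Ioo_zero_pi_div_two hα
  have hmax := h.ae_mul_eq_abs hα h₁ had₀ hd₀ hu
  have hone {t} (ht : t ∈ Icc a b) (hzero : γ t 2 0 = 0) : γ t 2 2 = 1 := by
    simpa [hzero, h₁, hcα.ne'] using h.1.hamiltonian_eq hmax ht
  have hcont := h.1.continuousOn_apply 2 0
  obtain ⟨d, hd, hzero⟩ := exists_eq_zero_iff_le h.1.hab hcont (by simp [h₁])
    fun p hp q hq hpq hp₀ hq₀ ↦ (h.restrict hp.1 hpq.le hq.2).exists_apply_two_zero_eq_zero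
      hsα.ne' hpq (ae_restrict_of_ae_restrict_of_subset (Icc_subset_Icc hp.1 hq.2) hmax)
      (hone hp hp₀) (hone hq hq₀)
  obtain ⟨ε, hε, hbang⟩ := exists_ae_eq_const_of_ae_mul_eq_abs
    (hcont.mono (Ioo_subset_Icc_self.trans (Icc_subset_Icc_left hd.1)))
    (fun t ht ht₀ ↦ ht.1.not_ge ((hzero t ⟨hd.1.trans ht.1.le, ht.2.le⟩).1 ht₀))
    (ae_restrict_of_ae_restrict_of_subset (Icc_subset_Icc_left hd.1) hmax)
  refine ⟨d, ε, (hzero d₀ ⟨had₀.le, hd₀⟩).1 ?_, hd.2, hε, ?_, hbang⟩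
  · rw [(h.1.restrict le_rfl had₀.le hd₀).eq_mul_rot_zero hu (right_mem_Icc.2 had₀.le), h₁,
      Matrix.one_mul]
    simp [rot_eq]
  · refine (h.1.restrict le_rfl hd.1 hd.2).ae_eq_zero_of_apply_two_eq_one hsα.ne' (i := 2)
      fun t ht ↦ ?_
    have htI : t ∈ Icc a b := ⟨ht.1, ht.2.trans hd.2⟩
    exact hone htI ((hzero t htI).2 ht.2)

end TimeOptimal

end Extremals

section ArcLengths

variable {α a b c d ε t : ℝ} {γ : ℝ → Matrix (Fin 3) (Fin 3) ℝ} {u : ℝ → ℝ}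

lemma ae_restrict_Icc_comp_neg {p : ℝ → Prop} :
    (∀ᵐ t ∂(volume.restrict (Icc (-b) (-a))), p (-t)) ↔
      ∀ᵐ t ∂(volume.restrict (Icc a b)), p t := by
  have hneg := (Measure.measurePreserving_neg (volume : Measure ℝ)).restrict_preimage_emb
    (MeasurableEquiv.neg ℝ).measurableEmbedding (Icc a b)
  rw [← hneg.map_eq, ← Set.neg_Icc]
  exact ((MeasurableEquiv.neg ℝ).measurableEmbedding.ae_map_iff).symm

lemma exists_mem_Ioo_of_ae_restrict_Icc {p : ℝ → Prop} (hab : a < b)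
    (h : ∀ᵐ t ∂(volume.restrict (Icc a b)), p t) : ∃ t ∈ Ioo a b, p t := by
  rw [← restrict_Ioo_eq_restrict_Icc] at h
  have : (ae (volume.restrict (Ioo a b))).NeBot := by
    rw [ae_restrict_neBot, volume_Ioo]
    simpa using hab
  exact ((ae_restrict_mem measurableSet_Ioo).and h).exists

/-- A half-turn of the singular arc before a bang arc can be moved behind it, at the cost of
reversing the sign of the bang. -/
lemma AdmissiblePair.exists_singular_swap (h : AdmissiblePair α a b γ u) (hα : 0 < cos α)
    (hac : a ≤ c) (hdb : d ≤ b) (hcd : cos α * (d - c) = π) (hε : |ε| = 1)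
    (hu₀ : ∀ᵐ t ∂(volume.restrict (Icc c d)), u t = 0)
    (hu : ∀ᵐ t ∂(volume.restrict (Icc d b)), u t = ε) :
    ∃ γ' u', AdmissiblePair α a b γ' u' ∧ γ' a = γ a ∧ γ' b = γ b ∧ EqOn u' u (Icc a c) ∧
      (∀ t ∈ Ioc c (c + (b - d)), u' t = -ε) ∧ ∀ t ∈ Ioc (c + (b - d)) b, u' t = 0 := by
  have hlt : c < d := by
    have := pos_of_mul_pos_right (hcd ▸ pi_pos) hα.le
    linarith
  have hcb := hlt.le.trans hdb
  have hcI : c ∈ Icc a b := ⟨hac, hcb⟩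
  set e := c + (b - d) with he
  have hec : e - c = b - d := by rw [he]; ring
  have hbe : b - e = d - c := by rw [he]; ring
  have hbang := mul_rot (α := α) (v := -ε) (ω := 1) (β := -(ε * α)) (h.mem_SO₃ hcI)
    (show c ≤ e by linarith) (by simpa using hε.le) (by simp [cos_mul_of_abs_eq_one hε])
    (by simp [sin_mul_of_abs_eq_one hε])
  have hsing := mul_rot (α := α) (v := 0) (ω := cos α) (β := 0) (hbang.mem_SO₃ hbang.right_mem)
    (show e ≤ b by linarith) (by simp) (by simp) (by simp)
  obtain ⟨γ₂, u₂, h₂, hγ₂l, hγ₂r, hu₂l, hu₂r⟩ := hbang.exists_concat hsing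
    (by simp [rot_zero])
  obtain ⟨γ', u', h', hγ'l, hγ'r, hu'l, hu'r⟩ :=
    (h.restrict le_rfl hac hcb).exists_concat h₂ (by simp [hγ₂l hbang.left_mem, rot_zero])
  refine ⟨γ', u', h', hγ'l (left_mem_Icc.2 hac), ?_, hu'l, fun t ht ↦ ?_, fun t ht ↦ ?_⟩
  · have hγd := (h.restrict hac hlt.le hdb).eq_mul_rot_zero hu₀ (right_mem_Icc.2 hlt.le)
    have hγb := (h.restrict (hac.trans hlt.le) hdb le_rfl).eq_mul_rot_of_abs_eq_one hε hu
      (right_mem_Icc.2 hdb)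
    rw [hγ'r h₂.right_mem, hγ₂r hsing.right_mem, hγb, hγd, hcd, Matrix.mul_assoc,
      rot_zero_pi_mul_rot]
    simp only [hbe, hec, hcd, one_mul, Matrix.mul_assoc]
  · rw [hu'r ⟨ht.1, by linarith [ht.2]⟩, hu₂l (Ioc_subset_Icc_self ht)]
  · rw [hu'r ⟨by linarith [ht.1], ht.2⟩, hu₂r ht]

namespace TimeOptimal

lemma exists_bang_singular {c₀ : ℝ} (h : TimeOptimal α a b γ u) (hα : α ∈ Ioo 0 (π / 2))
    (hac₀ : a ≤ c₀) (hc₀ : c₀ < b) (hu : ∀ᵐ t ∂(volume.restrict (Icc c₀ b)), u t = 0) :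
    ∃ c ε : ℝ, a ≤ c ∧ c ≤ c₀ ∧ |ε| = 1 ∧ (∀ᵐ t ∂(volume.restrict (Icc a c)), u t = ε) ∧
      ∀ᵐ t ∂(volume.restrict (Icc c b)), u t = 0 := by
  obtain ⟨c, ε, hc₀c, hca, hε, hsing, hbang⟩ := h.reverse.exists_singular_bang hα
    (neg_lt_neg hc₀) (neg_le_neg hac₀) (ae_restrict_Icc_comp_neg.2 hu)
  obtain ⟨c, rfl⟩ := neg_surjective c
  exact ⟨c, ε, neg_le_neg_iff.1 hca, neg_le_neg_iff.1 hc₀c, hε,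
    ae_restrict_Icc_comp_neg.1 hbang, ae_restrict_Icc_comp_neg.1 hsing⟩

lemma sub_lt_of_singular (h : TimeOptimal α a b γ u) (hα : 0 < cos α)
    (hu : ∀ᵐ t ∂(volume.restrict (Icc a b)), u t = 0) : b - a < 2 * π / cos α := by
  by_contra! hlong
  have hperiod : 0 < 2 * π / cos α := by positivity
  have hmem : a + 2 * π / cos α ∈ Icc a b := ⟨by linarith, by linarith⟩
  have hreturn : γ (a + 2 * π / cos α) = γ a := by
    rw [h.1.eq_mul_rot_zero hu hmem, add_sub_cancel_left, mul_div_cancel₀ _ hα.ne', rot,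
      rodrigues_eq_one cos_two_pi, Matrix.mul_one]
  linarith [h.injOn hmem h.1.left_mem hreturn]

lemma sub_le_of_singular_bang (h : TimeOptimal α a b γ u) (hα : α ∈ Ioo 0 (π / 2)) (hdb : d < b)
    (hε : |ε| = 1) (hu₀ : ∀ᵐ t ∂(volume.restrict (Icc a d)), u t = 0)
    (hu : ∀ᵐ t ∂(volume.restrict (Icc d b)), u t = ε) : d - a ≤ π / cos α := by
  by_contra! hlong
  have hcα : 0 < cos α := cos_pos_of_mem_Ioo_zero_pi_div_two hα
  have hhalf : 0 < π / cos α := by positivity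
  obtain ⟨c, hc⟩ : ∃ c, π / cos α = d - c := ⟨d - π / cos α, by ring⟩
  rw [hc] at hlong hhalf
  have hac : a < c := by linarith
  obtain ⟨γ', u', hγ', ha, hb, hfirst, hmid, hlast⟩ := h.1.exists_singular_swap hcα hac.le hdb.le
    (by rw [← hc, mul_div_cancel₀ _ hcα.ne']) hε
    (ae_restrict_of_ae_restrict_of_subset (Icc_subset_Icc_left hac.le) hu₀) hu
  have hsing : ∀ᵐ t ∂(volume.restrict (Icc a c)), u' t = 0 := by
    filter_upwards [ae_restrict_of_ae_restrict_of_subset (Icc_subset_Icc_right (by linarith)) hu₀,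
      ae_restrict_mem measurableSet_Icc] with t hut ht using (hfirst ht).trans hut
  obtain ⟨d', ε', -, hd'b, hε', hu₀', hu'⟩ :=
    (h.congr_endpoints hγ' ha hb).exists_singular_bang hα hac (by linarith) hsing
  have hd' : d' = b := hd'b.eq_of_not_lt fun hlt ↦ by
    obtain ⟨t, ht, hut⟩ := exists_mem_Ioo_of_ae_restrict_Icc (max_lt hlt (by linarith))
      (ae_restrict_of_ae_restrict_of_subset
        (Icc_subset_Icc_left (le_max_left d' (c + (b - d)))) hu')
    rw [hlast t ⟨(le_max_right _ _).trans_lt ht.1, ht.2.le⟩] at hut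
    simp [← hut] at hε'
  obtain ⟨t, ht, hut⟩ := exists_mem_Ioo_of_ae_restrict_Icc (show c < c + (b - d) by linarith)
    (ae_restrict_of_ae_restrict_of_subset (Icc_subset_Icc hac.le (by linarith)) hu₀')
  rw [hmid t (Ioo_subset_Ioc_self ht), neg_eq_zero] at hut
  simp [hut] at hε

lemma sub_le_of_bang_singular (h : TimeOptimal α a b γ u) (hα : α ∈ Ioo 0 (π / 2)) (hac : a < c)
    (hε : |ε| = 1) (hu : ∀ᵐ t ∂(volume.restrict (Icc a c)), u t = ε)
    (hu₀ : ∀ᵐ t ∂(volume.restrict (Icc c b)), u t = 0) : b - c ≤ π / cos α := by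
  have := h.reverse.sub_le_of_singular_bang hα (neg_lt_neg hac) hε
    (ae_restrict_Icc_comp_neg.2 hu₀) (ae_restrict_Icc_comp_neg.2 hu)
  linarith

end TimeOptimal

end ArcLengths

/-- A time optimal trajectory containing a singular arc is of type `B_t S_s B_{t'}`,
with `s < 2π/cos α`, and `s ≤ π/cos α` if one of the bang arcs is nontrivial. -/
theorem singular_structure (α a b : ℝ) (γ : ℝ → Matrix (Fin 3) (Fin 3) ℝ) (u : ℝ → ℝ)
    (hα : α ∈ Set.Ioo 0 (π / 2)) (hopt : TimeOptimal α a b γ u)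
    (hsing : ∃ c₀ d₀ : ℝ, a ≤ c₀ ∧ c₀ < d₀ ∧ d₀ ≤ b ∧
      ∀ᵐ t ∂(volume.restrict (Set.Icc c₀ d₀)), u t = 0) :
    ∃ c d ε ε' : ℝ, a ≤ c ∧ c ≤ d ∧ d ≤ b ∧
      (ε = 1 ∨ ε = -1) ∧ (ε' = 1 ∨ ε' = -1) ∧
      (∀ᵐ t ∂(volume.restrict (Set.Icc a c)), u t = ε) ∧
      (∀ᵐ t ∂(volume.restrict (Set.Icc c d)), u t = 0) ∧
      (∀ᵐ t ∂(volume.restrict (Set.Icc d b)), u t = ε') ∧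
      d - c < 2 * π / Real.cos α ∧
      ((a < c ∨ d < b) → d - c ≤ π / Real.cos α) := by
  obtain ⟨c₀, d₀, hac₀, hcd₀, hd₀b, hu⟩ := hsing
  have hcα : 0 < cos α := cos_pos_of_mem_Ioo_zero_pi_div_two hα
  obtain ⟨d, ε', hd₀d, hdb, hε', hsing', hbang'⟩ :=
    (hopt.restrict hac₀ (hcd₀.le.trans hd₀b) le_rfl).exists_singular_bang hα hcd₀ hd₀b hu
  have hc₀d : c₀ < d := hcd₀.trans_le hd₀d
  obtain ⟨c, ε, hac, hcc₀, hε, hbang, hzero⟩ :=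
    (hopt.restrict le_rfl (hac₀.trans hc₀d.le) hdb).exists_bang_singular hα hac₀ hc₀d hsing'
  have hcd : c ≤ d := hcc₀.trans hc₀d.le
  refine ⟨c, d, ε, ε', hac, hcd, hdb, eq_or_eq_neg_of_abs_eq hε, eq_or_eq_neg_of_abs_eq hε',
    hbang, hzero, hbang', (hopt.restrict hac hcd hdb).sub_lt_of_singular hcα hzero, ?_⟩
  rintro (hac' | hdb')
  · exact (hopt.restrict le_rfl (hac.trans hcd) hdb).sub_le_of_bang_singular hα hac' hε hbang hzero
  · exact (hopt.restrict hac (hcd.trans hdb) le_rfl).sub_le_of_singular_bang hα hdb' hε' hzero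
      hbang'
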